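/- Let X be a simply connected, locally simply connected metric space, D a countable dense subset of X, and x ∈ X. Then the homomorphism σ_* : π₁(E(X,D), x) → π₁(H, *) induced by the metric quotient map σ : E(X,D) → H collapsing X to a point is injective. Consequently π₁(E(X,D), x) is isomorphic to a subgroup of the Hawaiian earring group. -/

import Mathlib

open Classical

noncomputable section

namespace EarringPaper

variable {X : Type*} [MetricSpace X]

/-- The earring space `E(X,D)`: the base copy `X × {o}` together with a copy of the
circle attached at each point `d n` of the countable set `D = range d`. -/
structure ESp (X : Type*) [MetricSpace X] (d : ℕ+ → X) where
  pt : X × Circle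
  mem : pt.2 = 1 ∨ ∃ n : ℕ+, pt.1 = d n

/-- The scaling weight `1/n` at `x = d n` (and `0` off `D`). -/
def wt (d : ℕ+ → X) (x : X) : ℝ :=
  if h : ∃ n : ℕ+, x = d n then 1 / (h.choose : ℝ) else 0

/-- The earring metric `ρ` on `E(X,D)`. -/
def rho (d : ℕ+ → X) (p q : X × Circle) : ℝ :=
  if p.1 = q.1 ∧ ∃ n : ℕ+, p.1 = d n then wt d p.1 * dist p.2 q.2
  else dist p.1 q.1 + wt d p.1 * dist p.2 1 + wt d q.1 * dist q.2 1

/-- `E(X,D)` carries the topology of the metric `ρ` (generated by the `ρ`-balls). -/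
instance (d : ℕ+ → X) : TopologicalSpace (ESp X d) :=
  TopologicalSpace.generateFrom
    {s | ∃ (p : ESp X d) (r : ℝ), s = {q : ESp X d | rho d p.pt q.pt < r}}

/-- The points of the base copy `X × {o}` of `X` inside `E(X,D)`. -/
def InX {d : ℕ+ → X} (p : ESp X d) : Prop := p.pt.2 = 1

/-- The inclusion `X → E(X,D)`, `x ↦ (x,o)`. -/
def emb (d : ℕ+ → X) (x : X) : ESp X d := ⟨(x, 1), Or.inl rfl⟩

/-- `f` traverses, on `[u,v]`, the fixed winding of the circle attached at `d n`. -/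
def IsWinding (d : ℕ+ → X) (f : ℝ → ESp X d) (u v : ℝ) (n : ℕ+) : Prop :=
  ∃ φ : ℝ → ℝ, ContinuousOn φ (Set.Icc u v) ∧ MonotoneOn φ (Set.Icc u v) ∧
    φ u = 0 ∧ φ v = 1 ∧
    ∀ t ∈ Set.Icc u v, (f t).pt = (d n, Circle.exp (2 * Real.pi * φ t))

/-- `f` traverses, on `[u,v]`, the reverse of the fixed winding of the circle at `d n`. -/
def IsRevWinding (d : ℕ+ → X) (f : ℝ → ESp X d) (u v : ℝ) (n : ℕ+) : Prop :=
  ∃ φ : ℝ → ℝ, ContinuousOn φ (Set.Icc u v) ∧ MonotoneOn φ (Set.Icc u v) ∧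
    φ u = 0 ∧ φ v = 1 ∧
    ∀ t ∈ Set.Icc u v, (f t).pt = (d n, Circle.exp (-(2 * Real.pi) * φ t))

/-- A proper path in `E(X,D)` (with domain `[a,b]`): its endpoints lie in `X`, and each
maximal excursion out of `X` returning to the same point is a single winding or reverse
winding of one of the attached circles. -/
def IsProper (d : ℕ+ → X) (f : ℝ → ESp X d) (a b : ℝ) : Prop :=
  ContinuousOn f (Set.Icc a b) ∧ InX (f a) ∧ InX (f b) ∧
  ∀ u v, a ≤ u → u < v → v ≤ b → InX (f u) → InX (f v) →
    (∀ t ∈ Set.Ioo u v, ¬InX (f t)) → f u = f v →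
    ∃ n : ℕ+, IsWinding d f u v n ∨ IsRevWinding d f u v n

/-- Homotopy of paths `[a,b] → E(X,D)` relative to the endpoints. -/
def HtpyRel (d : ℕ+ → X) (f g : ℝ → ESp X d) (a b : ℝ) : Prop :=
  ∃ H : ℝ × ℝ → ESp X d,
    ContinuousOn H (Set.Icc a b ×ˢ Set.Icc (0 : ℝ) 1) ∧
    (∀ s ∈ Set.Icc a b, H (s, 0) = f s ∧ H (s, 1) = g s) ∧
    (∀ t ∈ Set.Icc (0 : ℝ) 1, H (a, t) = f a ∧ H (b, t) = f b)

/-- `Y` is locally simply connected: every point has a neighborhood basis of simply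
connected neighborhoods. -/
def LocSimplyConnected (Y : Type*) [TopologicalSpace Y] : Prop :=
  ∀ y : Y, ∀ U ∈ nhds y, ∃ V ∈ nhds y, V ⊆ U ∧ SimplyConnectedSpace V

end EarringPaper

noncomputable section

namespace EarringPaper

open Classical

variable {X : Type*} [MetricSpace X]

/-- The Hawaiian earring `H = ⋃_{n ≥ 1} C_n ⊆ ℝ²`, `C_n` the circle of radius `1/n`
centered at `(-1/n, 0)`. -/
def HEset : Set (ℝ × ℝ) :=
  {p | ∃ n : ℕ+, (p.1 + 1 / (n : ℝ)) ^ 2 + p.2 ^ 2 = (1 / (n : ℝ)) ^ 2}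

/-- The wild point (origin) of the Hawaiian earring. -/
def h0 : HEset := ⟨(0, 0), 1, by norm_num⟩

/-- The metric quotient map `σ : E(X,D) → H` collapsing the base copy of `X` to the wild
point: the circle attached at `d n` is carried onto the `n`-th circle `C_n` of `H`. -/
def sigmaMap (d : ℕ+ → X) (hd : Function.Injective d) (p : ESp X d) : HEset :=
  if h : ∃ n : ℕ+, p.pt.1 = d n then
    ⟨((((p.pt.2 : ℂ).re - 1)) / (h.choose : ℝ), (p.pt.2 : ℂ).im / (h.choose : ℝ)),
      h.choose, by
        have hpos : (0 : ℝ) < ((h.choose : ℕ+) : ℝ) := by exact_mod_cast h.choose.2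
        have hnorm : ((p.pt.2 : ℂ).re) ^ 2 + ((p.pt.2 : ℂ).im) ^ 2 = 1 := by
          have := Circle.normSq_coe p.pt.2
          rw [Complex.normSq_apply] at this
          nlinarith [this]
        field_simp
        nlinarith [hnorm]⟩
  else h0

/-!
The `n`-th circle of the earring space becomes a coordinate, which lifts to a real function along
any loop; pushing the lift to a nearby staircase `S n` changes the loop by a homotopy over its base
path. The unit steps of all the staircases are the letters of a transfinite word, finitely many for
each circle. A nullhomotopy of the image in the Hawaiian earring makes every finite part of this
word trivial in a free group, so each finite part has a noncrossing matching of mutually inverse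
letters, and by compactness so has the whole word.

Spread the time interval along the hypotenuse of a triangle. The matching draws in it a lamination,
each leaf of which joins two moments where the base path rests at the same point of `D`, so the base
path extends continuously to the leaves and the two legs. As `X` is simply connected and locally
simply connected, the extension continues over the gaps: fill the Whitney squares of the complement,
choosing each filling about as small as its boundary values permit. Along a leaf the two matched
letters may be cancelled, since the extended base path stays at the base point of their circle;
letting all of them cancel towards the legs is the required nullhomotopy.
-/

open Filter Topology

/-! ### The circle coordinates -/

section EarringSpace

variable {d : ℕ+ → X}

omit [MetricSpace X] in
theorem wt_nonneg (d : ℕ+ → X) (y : X) : 0 ≤ wt d y := by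
  unfold wt
  split_ifs <;> positivity

omit [MetricSpace X] in
theorem wt_of_notMem {y : X} (h : ¬∃ n, y = d n) : wt d y = 0 := dif_neg h

omit [MetricSpace X] in
theorem choose_index (hd : Function.Injective d) {y : X} {n : ℕ+} (hy : y = d n)
    (h : ∃ m : ℕ+, y = d m) : h.choose = n :=
  hd (h.choose_spec.symm.trans hy)

omit [MetricSpace X] in
theorem wt_apply (hd : Function.Injective d) (n : ℕ+) : wt d (d n) = 1 / (n : ℝ) := by
  rw [wt, dif_pos ⟨n, rfl⟩, choose_index hd rfl]

omit [MetricSpace X] in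
theorem wt_mul_le (hd : Function.Injective d) {y : X} {t δ : ℝ} (hδ : 0 ≤ δ)
    (h : ∀ n, y = d n → 1 / (n : ℝ) * t ≤ δ) : wt d y * t ≤ δ := by
  by_cases hD : ∃ n, y = d n
  · obtain ⟨n, rfl⟩ := hD
    simpa only [wt_apply hd] using h n rfl
  · simpa only [wt_of_notMem hD, zero_mul] using hδ

theorem rho_of_fst_eq {p q : X × Circle} (h : p.1 = q.1) :
    rho d p q = wt d p.1 * dist p.2 q.2 := by
  by_cases hD : ∃ n, p.1 = d n
  · rw [rho, if_pos ⟨h, hD⟩]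
  · rw [rho, if_neg (fun H => hD H.2), h, wt_of_notMem (h ▸ hD)]
    simp only [dist_self, zero_mul, add_zero]

theorem rho_of_fst_ne {p q : X × Circle} (h : p.1 ≠ q.1) :
    rho d p q = dist p.1 q.1 + wt d p.1 * dist p.2 1 + wt d q.1 * dist q.2 1 :=
  if_neg fun H => h H.1

theorem rho_self (p : X × Circle) : rho d p p = 0 := by
  rw [rho_of_fst_eq rfl, dist_self, mul_zero]

theorem rho_comm (p q : X × Circle) : rho d p q = rho d q p := by
  by_cases h : p.1 = q.1
  · rw [rho_of_fst_eq h, rho_of_fst_eq h.symm, h, dist_comm]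
  · rw [rho_of_fst_ne h, rho_of_fst_ne (Ne.symm h), dist_comm p.1]
    ring

theorem rho_triangle (p q r : X × Circle) : rho d p r ≤ rho d p q + rho d q r := by
  have base := dist_triangle p.1 q.1 r.1
  have hpq := dist_nonneg (x := p.1) (y := q.1)
  have hq := mul_nonneg (wt_nonneg d q.1) (dist_nonneg (x := q.2) (y := 1))
  have hp := wt_nonneg d p.1
  have hr := wt_nonneg d r.1
  rcases eq_or_ne p.1 q.1 with h | h <;> rcases eq_or_ne q.1 r.1 with h' | h'
  · rw [rho_of_fst_eq (h.trans h'), rho_of_fst_eq h, rho_of_fst_eq h', ← h, ← mul_add]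
    exact mul_le_mul_of_nonneg_left (dist_triangle _ _ _) hp
  · rw [rho_of_fst_ne (h ▸ h'), rho_of_fst_eq h, rho_of_fst_ne h', ← h]
    linarith [mul_le_mul_of_nonneg_left (dist_triangle p.2 q.2 1) hp]
  · rw [rho_of_fst_ne (h' ▸ h), rho_of_fst_ne h, rho_of_fst_eq h', h']
    linarith [mul_le_mul_of_nonneg_left (dist_triangle_left r.2 1 q.2) hr]
  · rw [rho_of_fst_ne h, rho_of_fst_ne h']
    rcases eq_or_ne p.1 r.1 with h'' | h''
    · rw [rho_of_fst_eq h'', ← h'']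
      linarith [mul_le_mul_of_nonneg_left (dist_triangle_right p.2 r.2 1) hp,
        dist_nonneg (x := q.1) (y := p.1)]
    · rw [rho_of_fst_ne h'']
      linarith

theorem isOpen_iff_rho (s : Set (ESp X d)) :
    IsOpen s ↔ ∀ p ∈ s, ∃ ε > 0, ∀ q : ESp X d, rho d p.pt q.pt < ε → q ∈ s := by
  refine ⟨fun hs => ?_, fun hs => isOpen_iff_forall_mem_open.2 fun p hp => ?_⟩
  · induction hs with
    | basic _ h =>
      obtain ⟨c, r, rfl⟩ := h
      exact fun p hp => ⟨r - rho d c.pt p.pt, sub_pos.2 hp, fun q hq =>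
        (rho_triangle c.pt p.pt q.pt).trans_lt (lt_sub_iff_add_lt'.1 hq)⟩
    | univ => exact fun _ _ => ⟨1, one_pos, fun _ _ => trivial⟩
    | inter _ _ _ _ ihs iht =>
      intro p hp
      obtain ⟨ε, hε, hs⟩ := ihs p hp.1
      obtain ⟨δ, hδ, ht⟩ := iht p hp.2
      exact ⟨min ε δ, lt_min hε hδ, fun q hq =>
        ⟨hs q (hq.trans_le (min_le_left _ _)), ht q (hq.trans_le (min_le_right _ _))⟩⟩
    | sUnion _ _ ih =>
      rintro p ⟨t, ht, hp⟩
      obtain ⟨ε, hε, h⟩ := ih t ht p hp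
      exact ⟨ε, hε, fun q hq => ⟨t, ht, h q hq⟩⟩
  · obtain ⟨ε, hε, h⟩ := hs p hp
    exact ⟨{q | rho d p.pt q.pt < ε}, h, TopologicalSpace.isOpen_generateFrom_of_mem ⟨p, ε, rfl⟩,
      by simpa only [Set.mem_ofPred_eq, rho_self] using hε⟩

instance : PseudoMetricSpace (ESp X d) :=
  .ofDistTopology (fun p q => rho d p.pt q.pt) (fun p => rho_self p.pt)
    (fun p q => rho_comm p.pt q.pt) (fun p q r => rho_triangle p.pt q.pt r.pt) isOpen_iff_rho

namespace ESp

/-- The retraction of the earring space onto its base space. -/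
def base (p : ESp X d) : X := p.pt.1

/-- The coordinate of a point of the earring space on the `n`-th circle, with all the other circles
and the base space collapsed to `1`. -/
def coord (n : ℕ+) (p : ESp X d) : Circle := if p.base = d n then p.pt.2 else 1

theorem dist_of_base_eq {p q : ESp X d} (h : p.base = q.base) :
    dist p q = wt d p.base * dist p.pt.2 q.pt.2 :=
  rho_of_fst_eq h

theorem dist_of_base_ne {p q : ESp X d} (h : p.base ≠ q.base) :
    dist p q = dist p.base q.base + wt d p.base * dist p.pt.2 1 + wt d q.base * dist q.pt.2 1 :=
  rho_of_fst_ne h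

theorem coord_of_base_eq {p : ESp X d} {n : ℕ+} (h : p.base = d n) : p.coord n = p.pt.2 := if_pos h

theorem coord_of_base_ne {p : ESp X d} {n : ℕ+} (h : p.base ≠ d n) : p.coord n = 1 := if_neg h

theorem base_eq_of_coord_ne_one {p : ESp X d} {n : ℕ+} (h : p.coord n ≠ 1) : p.base = d n := by
  by_contra h'
  exact h (coord_of_base_ne h')

theorem ext_coord {p q : ESp X d} (hb : p.base = q.base) (hc : ∀ n, p.coord n = q.coord n) :
    p = q := by
  have hpt : p.pt = q.pt := Prod.ext hb <| by
    by_cases hD : ∃ n, p.base = d n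
    · obtain ⟨n, hn⟩ := hD
      rw [← coord_of_base_eq hn, ← coord_of_base_eq (hb ▸ hn), hc n]
    · have hD' : ¬∃ n, q.base = d n := hb ▸ hD
      rw [p.mem.resolve_right hD, q.mem.resolve_right hD']
  cases p
  cases q
  cases hpt
  rfl

theorem coord_emb (n : ℕ+) (y : X) : (emb d y).coord n = 1 := ite_self _

theorem wt_mul_dist_one_le_dist {p q : ESp X d} (h : p.base ≠ q.base) :
    wt d p.base * dist p.pt.2 1 ≤ dist p q := by
  have hq := mul_nonneg (wt_nonneg d q.base) (dist_nonneg (x := q.pt.2) (y := 1))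
  linarith [dist_of_base_ne h, dist_nonneg (x := p.base) (y := q.base)]

theorem lipschitzWith_base : LipschitzWith 1 (base : ESp X d → X) := by
  refine .mk_one fun p q => ?_
  by_cases h : p.base = q.base
  · simpa only [h, dist_self] using dist_nonneg
  · have hp := mul_nonneg (wt_nonneg d p.base) (dist_nonneg (x := p.pt.2) (y := 1))
    have hq := mul_nonneg (wt_nonneg d q.base) (dist_nonneg (x := q.pt.2) (y := 1))
    linarith [dist_of_base_ne h]

theorem lipschitzWith_coord (hd : Function.Injective d) (n : ℕ+) :
    LipschitzWith n (coord n : ESp X d → Circle) := by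
  have hn : (0 : ℝ) < n := by exact_mod_cast n.pos
  have outside (p q : ESp X d) (hp : p.base = d n) (hq : q.base ≠ d n) :
      dist (p.coord n) (q.coord n) ≤ n * dist p q := by
    have := wt_mul_dist_one_le_dist (hp ▸ hq.symm)
    rw [hp, wt_apply hd, one_div, inv_mul_le_iff₀ hn] at this
    rwa [coord_of_base_eq hp, coord_of_base_ne hq]
  refine .of_dist_le_mul fun p q => ?_
  by_cases hp : p.base = d n <;> by_cases hq : q.base = d n
  · rw [dist_of_base_eq (hp.trans hq.symm), coord_of_base_eq hp, coord_of_base_eq hq, hp,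
      wt_apply hd, NNReal.coe_natCast, ← mul_assoc, mul_one_div_cancel hn.ne', one_mul]
  · exact outside p q hp hq
  · rw [dist_comm, dist_comm p]
    exact outside q p hq hp
  · rw [coord_of_base_ne hp, coord_of_base_ne hq, dist_self]
    positivity

theorem dist_le_of_coord_le (hd : Function.Injective d) {p q : ESp X d} {δ : ℝ} (hδ : 0 ≤ δ)
    (h : ∀ n : ℕ+, 1 / (n : ℝ) * dist (p.coord n) (q.coord n) ≤ δ) :
    dist p q ≤ dist p.base q.base + 2 * δ := by
  by_cases hb : p.base = q.base
  · have : wt d p.base * dist p.pt.2 q.pt.2 ≤ δ := wt_mul_le hd hδ fun n hn => by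
      simpa only [coord_of_base_eq hn, coord_of_base_eq (hb ▸ hn)] using h n
    linarith [dist_of_base_eq hb, dist_nonneg (x := p.base) (y := q.base)]
  · have hp : wt d p.base * dist p.pt.2 1 ≤ δ := wt_mul_le hd hδ fun n hn => by
      simpa only [coord_of_base_eq hn, coord_of_base_ne fun hq => hb (hn.trans hq.symm)] using h n
    have hq : wt d q.base * dist q.pt.2 1 ≤ δ := wt_mul_le hd hδ fun n hn => by
      simpa only [coord_of_base_eq hn, coord_of_base_ne fun hp => hb (hp.trans hn.symm),
        dist_comm (1 : Circle)] using h n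
    linarith [dist_of_base_ne hb]

end ESp

theorem eventually_forall_one_div_mul_dist_le {Y Z : Type*} [PseudoMetricSpace Y] [BoundedSpace Y]
    [TopologicalSpace Z] {u : ℕ+ → Z → Y} {z : Z} (hu : ∀ n, ContinuousAt (u n) z) {ε : ℝ}
    (hε : 0 < ε) : ∀ᶠ w in 𝓝 z, ∀ n : ℕ+, 1 / (n : ℝ) * dist (u n w) (u n z) ≤ ε := by
  obtain ⟨N, hN⟩ := exists_nat_gt (Metric.diam (Set.univ : Set Y) / ε)
  have hfin : {n : ℕ+ | (n : ℕ) ≤ N}.Finite :=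
    (Set.finite_Iic N).preimage PNat.coe_injective.injOn
  have small : ∀ᶠ w in 𝓝 z, ∀ n ∈ {n : ℕ+ | (n : ℕ) ≤ N}, dist (u n w) (u n z) < ε :=
    (eventually_all_finite hfin).2 fun n _ => Metric.tendsto_nhds.1 (hu n) ε hε
  filter_upwards [small] with w hw n
  have hn : (1 : ℝ) ≤ n := by exact_mod_cast n.pos
  rw [one_div, inv_mul_le_iff₀ (by linarith)]
  by_cases hnN : (n : ℕ) ≤ N
  · exact (hw n hnN).le.trans (le_mul_of_one_le_left hε.le hn)
  · have hNn : (N : ℝ) ≤ n := by exact_mod_cast (not_le.1 hnN).le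
    rw [div_lt_iff₀ hε] at hN
    calc dist (u n w) (u n z) ≤ Metric.diam (Set.univ : Set Y) :=
          Metric.dist_le_diam_of_mem (Bornology.IsBounded.all _) trivial trivial
      _ ≤ n * ε := hN.le.trans (by gcongr)

theorem ESp.continuous_of_coord (hd : Function.Injective d) {Z : Type*} [TopologicalSpace Z]
    {g : Z → ESp X d} (hb : Continuous fun z => (g z).base)
    (hc : ∀ n, Continuous fun z => (g z).coord n) : Continuous g := by
  refine continuous_iff_continuousAt.2 fun z => Metric.tendsto_nhds.2 fun ε hε => ?_
  filter_upwards [Metric.tendsto_nhds.1 hb.continuousAt (ε / 2) (half_pos hε),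
    eventually_forall_one_div_mul_dist_le (fun n => (hc n).continuousAt) (div_pos hε four_pos)]
    with w hbase hcoord
  linarith [ESp.dist_le_of_coord_le hd (div_pos hε four_pos).le hcoord]

/-- The point of the earring space with base point `y` and circle coordinates `u`; only the
coordinate of the circle attached at `y`, if there is one, is used. -/
def ESp.ofCoord (d : ℕ+ → X) (y : X) (u : ℕ+ → Circle) : ESp X d where
  pt := (y, if h : ∃ n, y = d n then u h.choose else 1)
  mem := by
    by_cases h : ∃ n, y = d n
    · exact .inr h
    · exact .inl (dif_neg h)

theorem ESp.coord_ofCoord (hd : Function.Injective d) {y : X} {u : ℕ+ → Circle}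
    (h : ∀ n, u n ≠ 1 → y = d n) (n : ℕ+) : (ESp.ofCoord d y u).coord n = u n := by
  by_cases hn : y = d n
  · have hD : ∃ m, y = d m := ⟨n, hn⟩
    exact (if_pos hn).trans ((dif_pos hD).trans (congrArg u (choose_index hd hn hD)))
  · exact (if_neg hn).trans (not_not.1 fun h' => hn (h n (Ne.symm h')))

theorem ESp.continuous_ofCoord (hd : Function.Injective d) {Z : Type*} [TopologicalSpace Z]
    {F : Z → X} {u : Z → ℕ+ → Circle} (hF : Continuous F) (hu : ∀ n, Continuous fun z => u z n)
    (h : ∀ z n, u z n ≠ 1 → F z = d n) : Continuous fun z => ESp.ofCoord d (F z) (u z) :=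
  ESp.continuous_of_coord hd hF fun n => by simpa only [ESp.coord_ofCoord hd (h _)] using hu n

end EarringSpace

section HawaiianEarring

/-- The point `p` of the Hawaiian earring lies on the `n`-th circle. -/
def OnCircle (n : ℕ+) (p : HEset) : Prop :=
  (p.1.1 + 1 / (n : ℝ)) ^ 2 + p.1.2 ^ 2 = (1 / (n : ℝ)) ^ 2

theorem onCircle_iff {n : ℕ+} {p : HEset} :
    OnCircle n p ↔ (n : ℝ) * (p.1.1 ^ 2 + p.1.2 ^ 2) = -2 * p.1.1 := by
  have factor : (p.1.1 + 1 / (n : ℝ)) ^ 2 + p.1.2 ^ 2 - (1 / (n : ℝ)) ^ 2 =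
      1 / n * (n * (p.1.1 ^ 2 + p.1.2 ^ 2) - -2 * p.1.1) := by
    field_simp
    ring
  rw [OnCircle, ← sub_eq_zero, factor, mul_eq_zero_iff_left (by positivity), sub_eq_zero]

theorem sq_add_sq_pos_of_ne_h0 {p : HEset} (h : p ≠ h0) : 0 < p.1.1 ^ 2 + p.1.2 ^ 2 := by
  contrapose! h
  have h1 : p.1.1 = 0 := by nlinarith
  have h2 : p.1.2 = 0 := by nlinarith
  exact Subtype.ext (Prod.ext h1 h2)

theorem OnCircle.natCast_eq {n : ℕ+} {p : HEset} (hn : OnCircle n p) (hp : p ≠ h0) :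
    (n : ℝ) = -2 * p.1.1 / (p.1.1 ^ 2 + p.1.2 ^ 2) :=
  eq_div_of_mul_eq (sq_add_sq_pos_of_ne_h0 hp).ne' (onCircle_iff.1 hn)

theorem OnCircle.unique {m n : ℕ+} {p : HEset} (hm : OnCircle m p) (hn : OnCircle n p)
    (hp : p ≠ h0) : m = n := by
  exact_mod_cast (hm.natCast_eq hp).trans (hn.natCast_eq hp).symm

theorem OnCircle.eventually {m : ℕ+} {p : HEset} (hm : OnCircle m p) (hp : p ≠ h0) :
    ∀ᶠ q in 𝓝 p, OnCircle m q := by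
  have hc : ContinuousAt (fun q : HEset => -2 * q.1.1 / (q.1.1 ^ 2 + q.1.2 ^ 2)) p := by
    refine ContinuousAt.div ?_ ?_ (sq_add_sq_pos_of_ne_h0 hp).ne' <;> fun_prop
  filter_upwards [Metric.tendsto_nhds.1 hc 1 one_pos, isOpen_ne.mem_nhds hp] with q hdist hq
  obtain ⟨k, hk : OnCircle k q⟩ := q.2
  rw [← hk.natCast_eq hq, ← hm.natCast_eq hp] at hdist
  have hkm : |(k : ℤ) - (m : ℤ)| < 1 := by
    rw [Real.dist_eq] at hdist
    exact_mod_cast hdist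
  have : k = m := by exact_mod_cast sub_eq_zero.1 (Int.abs_lt_one_iff.1 hkm)
  exact this ▸ hk

/-- The affine map carrying the `n`-th circle of the Hawaiian earring onto the unit circle. -/
def rescale (n : ℕ+) (p : HEset) : ℂ := n * (p.1.1 + p.1.2 * Complex.I) + 1

theorem rescale_re (n : ℕ+) (p : HEset) : (rescale n p).re = n * p.1.1 + 1 := by
  simp [rescale]

theorem rescale_im (n : ℕ+) (p : HEset) : (rescale n p).im = n * p.1.2 := by
  simp [rescale]

theorem continuous_rescale (n : ℕ+) : Continuous (rescale n) := by
  unfold rescale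
  fun_prop

theorem rescale_h0 (n : ℕ+) : rescale n h0 = 1 := by
  simp [rescale, h0]

theorem OnCircle.norm_rescale {n : ℕ+} {p : HEset} (h : OnCircle n p) : ‖rescale n p‖ = 1 := by
  rw [Complex.norm_eq_sqrt_sq_add_sq, Real.sqrt_eq_one, rescale_re, rescale_im]
  linear_combination (n : ℝ) * onCircle_iff.1 h

/-- The `n`-th circle coordinate of the Hawaiian earring: all the circles but the `n`-th one are
collapsed to `1`. -/
def hawaiianCoord (n : ℕ+) (p : HEset) : Circle where
  val := if OnCircle n p then rescale n p else 1
  property := by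
    split_ifs with h
    · exact mem_sphere_zero_iff_norm.2 h.norm_rescale
    · exact mem_sphere_zero_iff_norm.2 norm_one

theorem coe_hawaiianCoord (n : ℕ+) (p : HEset) :
    (hawaiianCoord n p : ℂ) = if OnCircle n p then rescale n p else 1 :=
  rfl

theorem hawaiianCoord_of_not_onCircle {n : ℕ+} {p : HEset} (h : ¬OnCircle n p) :
    hawaiianCoord n p = 1 :=
  Circle.ext (if_neg h)

theorem hawaiianCoord_h0 (n : ℕ+) : hawaiianCoord n h0 = 1 := by
  apply Circle.ext
  rw [coe_hawaiianCoord, rescale_h0, ite_self, Circle.coe_one]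

theorem continuous_hawaiianCoord (n : ℕ+) : Continuous (hawaiianCoord n) := by
  suffices h : Continuous fun p => (hawaiianCoord n p : ℂ) from continuous_induced_rng.2 h
  refine continuous_iff_continuousAt.2 fun p => ?_
  by_cases hp : p = h0
  · subst hp
    refine Metric.tendsto_nhds.2 fun ε hε => ?_
    filter_upwards [Metric.tendsto_nhds.1 (continuous_rescale n).continuousAt ε hε] with q hq
    rw [rescale_h0] at hq
    simp only [hawaiianCoord_h0, Circle.coe_one, coe_hawaiianCoord]
    split_ifs
    · exact hq
    · rwa [dist_self]
  · obtain ⟨m, hm : OnCircle m p⟩ := p.2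
    by_cases hmn : m = n
    · subst hmn
      refine (continuous_rescale m).continuousAt.congr ?_
      filter_upwards [hm.eventually hp] with q hq
      exact ((coe_hawaiianCoord m q).trans (if_pos hq)).symm
    · refine (continuousAt_const (y := (1 : ℂ))).congr ?_
      filter_upwards [hm.eventually hp, isOpen_ne.mem_nhds hp] with q hq hq0
      exact ((coe_hawaiianCoord n q).trans (if_neg fun h => hmn (hq.unique h hq0))).symm

theorem hawaiianCoord_eq_one_of_ne {m n : ℕ+} {p : HEset} (h : hawaiianCoord m p ≠ 1)
    (hmn : n ≠ m) : hawaiianCoord n p = 1 := by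
  by_contra hn
  have hp : p ≠ h0 := fun hp => h (hp ▸ hawaiianCoord_h0 m)
  have on {k : ℕ+} (hk : hawaiianCoord k p ≠ 1) : OnCircle k p :=
    not_not.1 fun hk' => hk (hawaiianCoord_of_not_onCircle hk')
  exact hmn ((on hn).unique (on h) hp)

end HawaiianEarring

section Collapse

variable {d : ℕ+ → X}

theorem sigmaMap_of_base_eq (hd : Function.Injective d) {p : ESp X d} {n : ℕ+} (h : p.base = d n) :
    (sigmaMap d hd p : ℝ × ℝ) =
      (((p.pt.2 : ℂ).re - 1) / (n : ℝ), (p.pt.2 : ℂ).im / (n : ℝ)) := by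
  have hD : ∃ m, p.pt.1 = d m := ⟨n, h⟩
  have hn : hD.choose = n := choose_index hd h hD
  rw [sigmaMap, dif_pos hD]
  simp only [hn]

theorem sigmaMap_of_notMem (hd : Function.Injective d) {p : ESp X d} (h : ¬∃ n, p.base = d n) :
    sigmaMap d hd p = h0 :=
  dif_neg h

theorem onCircle_sigmaMap (hd : Function.Injective d) {p : ESp X d} {n : ℕ+} (h : p.base = d n) :
    OnCircle n (sigmaMap d hd p) := by
  rw [onCircle_iff, sigmaMap_of_base_eq hd h]
  have := Circle.normSq_coe p.pt.2
  rw [Complex.normSq_apply] at this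
  field_simp
  linear_combination this

theorem rescale_sigmaMap (hd : Function.Injective d) {p : ESp X d} {n : ℕ+} (h : p.base = d n) :
    rescale n (sigmaMap d hd p) = p.pt.2 := by
  apply Complex.ext
  · rw [rescale_re, sigmaMap_of_base_eq hd h]
    field_simp
    ring
  · rw [rescale_im, sigmaMap_of_base_eq hd h]
    field_simp

theorem sigmaMap_emb (hd : Function.Injective d) (x : X) : sigmaMap d hd (emb d x) = h0 := by
  by_cases h : ∃ n, (emb d x).base = d n
  · obtain ⟨n, hn⟩ := h
    apply Subtype.ext
    rw [sigmaMap_of_base_eq hd hn]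
    simp [emb, h0]
  · exact sigmaMap_of_notMem hd h

theorem hawaiianCoord_sigmaMap (hd : Function.Injective d) (n : ℕ+) (p : ESp X d) :
    hawaiianCoord n (sigmaMap d hd p) = p.coord n := by
  by_cases hn : p.base = d n
  · apply Circle.ext
    rw [coe_hawaiianCoord, if_pos (onCircle_sigmaMap hd hn), rescale_sigmaMap hd hn,
      ESp.coord_of_base_eq hn]
  rw [ESp.coord_of_base_ne hn]
  by_cases hs : sigmaMap d hd p = h0
  · rw [hs, hawaiianCoord_h0]
  obtain ⟨m, hm⟩ : ∃ m, p.base = d m := not_not.1 fun h => hs (sigmaMap_of_notMem hd h)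
  refine hawaiianCoord_of_not_onCircle fun h => hn ?_
  rw [h.unique (onCircle_sigmaMap hd hm) hs, hm]

theorem dist_sigmaMap_of_base_eq (hd : Function.Injective d) {p q : ESp X d} {n : ℕ+}
    (hp : p.base = d n) (hq : q.base = d n) :
    dist (sigmaMap d hd p) (sigmaMap d hd q) ≤ 1 / (n : ℝ) * dist p.pt.2 q.pt.2 := by
  have hn : (0 : ℝ) < n := by exact_mod_cast n.pos
  have hdist : dist p.pt.2 q.pt.2 = ‖(p.pt.2 : ℂ) - q.pt.2‖ := dist_eq_norm (p.pt.2 : ℂ) q.pt.2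
  have hre := Complex.abs_re_le_norm ((p.pt.2 : ℂ) - q.pt.2)
  have him := Complex.abs_im_le_norm ((p.pt.2 : ℂ) - q.pt.2)
  rw [Complex.sub_re] at hre
  rw [Complex.sub_im] at him
  rw [Subtype.dist_eq, sigmaMap_of_base_eq hd hp, sigmaMap_of_base_eq hd hq, Prod.dist_eq,
    max_le_iff, one_div_mul_eq_div, hdist]
  simp only [Real.dist_eq, ← sub_div, abs_div, abs_of_pos hn, sub_sub_sub_cancel_right]
  exact ⟨by gcongr, by gcongr⟩

theorem dist_sigmaMap_h0_le (hd : Function.Injective d) (p : ESp X d) :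
    dist (sigmaMap d hd p) h0 ≤ wt d p.base * dist p.pt.2 1 := by
  by_cases h : ∃ n, p.base = d n
  · obtain ⟨n, hn⟩ := h
    have := dist_sigmaMap_of_base_eq hd hn (q := emb d (d n)) rfl
    rwa [sigmaMap_emb, ← wt_apply hd, ← hn] at this
  · rw [sigmaMap_of_notMem hd h, wt_of_notMem h, dist_self, zero_mul]

theorem lipschitzWith_sigmaMap (hd : Function.Injective d) : LipschitzWith 1 (sigmaMap d hd) := by
  refine .mk_one fun p q => ?_
  by_cases hb : p.base = q.base
  · by_cases hD : ∃ n, p.base = d n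
    · obtain ⟨n, hn⟩ := hD
      rw [ESp.dist_of_base_eq hb, hn, wt_apply hd]
      exact dist_sigmaMap_of_base_eq hd hn (hb ▸ hn)
    · rw [sigmaMap_of_notMem hd hD, sigmaMap_of_notMem hd (by rwa [← hb]), dist_self]
      exact dist_nonneg
  · linarith [ESp.dist_of_base_ne hb, dist_sigmaMap_h0_le hd p, dist_sigmaMap_h0_le hd q,
      dist_triangle_right (sigmaMap d hd p) (sigmaMap d hd q) h0,
      dist_nonneg (x := p.base) (y := q.base)]

end Collapse

/-! ### Extension of maps to the plane -/

section SquareFilling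

open unitInterval

/-- The boundary of the unit square. -/
def squareBoundary : Set (I × I) := {p | p.1 = 0 ∨ p.1 = 1 ∨ p.2 = 0 ∨ p.2 = 1}

theorem swap_mem_squareBoundary {p : I × I} : p.swap ∈ squareBoundary ↔ p ∈ squareBoundary := by
  simp only [squareBoundary, Set.mem_ofPred_eq, Prod.fst_swap, Prod.snd_swap]
  tauto

/-- The path from `(0, 0)` to `(1, 1)` along the lower and the right side of the unit square. -/
def lowerRightPath : Path ((0, 0) : I × I) (1, 1) where
  toFun s := (Set.projIcc 0 1 zero_le_one (2 * (s : ℝ)),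
    Set.projIcc 0 1 zero_le_one (2 * (s : ℝ) - 1))
  source' := by simp
  target' := by
    rw [Prod.mk.injEq, projIcc_eq_one, projIcc_eq_one]
    norm_num

/-- The path from `(0, 0)` to `(1, 1)` along the left and the upper side of the unit square. -/
def upperLeftPath : Path ((0, 0) : I × I) (1, 1) := lowerRightPath.map continuous_swap

/-- The straight-line sweep of the unit square by paths from `(0, 0)` to `(1, 1)`, from the upper
left boundary path to the lower right one. -/
def sweep : C(I × I, I × I) where
  toFun q := (Set.Icc.convexComb (lowerRightPath q.2).2 (lowerRightPath q.2).1 q.1,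
    Set.Icc.convexComb (lowerRightPath q.2).1 (lowerRightPath q.2).2 q.1)
  continuous_toFun := by
    have h : Continuous fun q : I × I => lowerRightPath q.2 := by fun_prop
    exact (Set.Icc.continuous_convexComb_prod.comp
      (h.snd.prodMk (h.fst.prodMk continuous_fst))).prodMk
        (Set.Icc.continuous_convexComb_prod.comp (h.fst.prodMk (h.snd.prodMk continuous_fst)))

theorem sweep_zero_left (s : I) : sweep (0, s) = upperLeftPath s := by
  simp [sweep, upperLeftPath, Prod.swap]

theorem sweep_one_left (s : I) : sweep (1, s) = lowerRightPath s := by simp [sweep]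

theorem lowerRightPath_of_le {s : I} (hs : 2 * (s : ℝ) ≤ 1) :
    lowerRightPath s = (⟨2 * s, by linarith [s.2.1], hs⟩, 0) :=
  Prod.ext (Set.projIcc_of_mem zero_le_one _) (projIcc_eq_zero.2 (by linarith))

theorem lowerRightPath_of_ge {s : I} (hs : 1 ≤ 2 * (s : ℝ)) :
    lowerRightPath s = (1, ⟨2 * s - 1, by linarith, by linarith [s.2.2]⟩) :=
  Prod.ext (projIcc_eq_one.2 hs) (Set.projIcc_of_mem zero_le_one _)

theorem lowerRightPath_mem_squareBoundary (s : I) : lowerRightPath s ∈ squareBoundary := by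
  rcases le_total (2 * (s : ℝ)) 1 with hs | hs
  · simp [lowerRightPath_of_le hs, squareBoundary]
  · simp [lowerRightPath_of_ge hs, squareBoundary]

theorem upperLeftPath_mem_squareBoundary (s : I) : upperLeftPath s ∈ squareBoundary :=
  swap_mem_squareBoundary.2 (lowerRightPath_mem_squareBoundary s)

theorem exists_path_eq_of_mem_squareBoundary {p : I × I} (hp : p ∈ squareBoundary) :
    ∃ s, lowerRightPath s = p ∨ upperLeftPath s = p := by
  have lower : ∀ x : I, ∃ s, lowerRightPath s = (x, 0) := fun x =>
    ⟨⟨x / 2, by linarith [x.2.1], by linarith [x.2.2]⟩, by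
      rw [lowerRightPath_of_le (by simpa [mul_div_cancel₀] using x.2.2)]
      simp [mul_div_cancel₀]⟩
  have right : ∀ y : I, ∃ s, lowerRightPath s = (1, y) := fun y =>
    ⟨⟨(y + 1) / 2, by linarith [y.2.1], by linarith [y.2.2]⟩, by
      rw [lowerRightPath_of_ge (by simpa [mul_div_cancel₀] using y.2.1)]
      simp [mul_div_cancel₀]⟩
  obtain ⟨x, y⟩ := p
  rcases hp with h | h | h | h <;> obtain rfl : _ = _ := h
  · obtain ⟨s, hs⟩ := lower y
    exact ⟨s, Or.inr (by rw [upperLeftPath, Path.map_coe, Function.comp_apply, hs]; rfl)⟩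
  · exact (right y).imp fun s hs => Or.inl hs
  · exact (lower x).imp fun s hs => Or.inl hs
  · obtain ⟨s, hs⟩ := right x
    exact ⟨s, Or.inr (by rw [upperLeftPath, Path.map_coe, Function.comp_apply, hs]; rfl)⟩

theorem coe_sweep_fst_add_snd (t s : I) :
    ((sweep (t, s)).1 : ℝ) + (sweep (t, s)).2 = 2 * s := by
  simp only [sweep, ContinuousMap.coe_mk, Set.Icc.coe_convexComb]
  rcases le_total (2 * (s : ℝ)) 1 with hs | hs
  · simp only [lowerRightPath_of_le hs, Set.Icc.coe_zero]; ring
  · simp only [lowerRightPath_of_ge hs, Set.Icc.coe_one]; ring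

theorem sweep_surjective : Function.Surjective sweep := by
  rintro ⟨x, y⟩
  have ⟨hx₀, hx₁⟩ := x.2
  have ⟨hy₀, hy₁⟩ := y.2
  let s : I := ⟨(x + y) / 2, by linarith, by linarith⟩
  have hs : 2 * (s : ℝ) = x + y := mul_div_cancel₀ _ two_ne_zero
  have hx : (lowerRightPath s).2 ≤ x ∧ x ≤ (lowerRightPath s).1 := by
    rcases le_total (2 * (s : ℝ)) 1 with h | h
    · rw [lowerRightPath_of_le h]
      exact ⟨x.2.1, Subtype.mk_le_mk.2 (by linarith)⟩
    · rw [lowerRightPath_of_ge h]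
      exact ⟨Subtype.mk_le_mk.2 (by linarith), x.2.2⟩
  obtain ⟨t, ht⟩ : ∃ t, (sweep (t, s)).1 = x := ⟨_, (Set.Icc.eq_convexComb hx.1 hx.2).symm⟩
  refine ⟨(t, s), Prod.ext ht (Subtype.ext ?_)⟩
  have hadd := coe_sweep_fst_add_snd t s
  rw [hs, ht] at hadd
  exact add_left_cancel hadd

theorem eq_or_eq_zero_or_eq_one_of_sweep_eq {t t' s s' : I} (h : sweep (t, s) = sweep (t', s')) :
    s = s' ∧ (t = t' ∨ s = 0 ∨ s = 1) := by
  obtain rfl : s = s' := Subtype.ext (by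
    linarith [coe_sweep_fst_add_snd t s, h ▸ coe_sweep_fst_add_snd t' s'])
  refine ⟨rfl, ?_⟩
  have h₁ := congrArg (fun p : I × I => (p.1 : ℝ)) h
  simp only [sweep, ContinuousMap.coe_mk, Set.Icc.coe_convexComb] at h₁
  have hmul : ((t : ℝ) - t') * ((lowerRightPath s).1 - (lowerRightPath s).2) = 0 := by linarith
  rcases mul_eq_zero.1 hmul with ht | hs
  · exact Or.inl (Subtype.ext (sub_eq_zero.1 ht))
  · right
    rcases le_total (2 * (s : ℝ)) 1 with h | h
    · simp only [lowerRightPath_of_le h, Set.Icc.coe_zero] at hs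
      exact Or.inl (Subtype.ext (by linarith [Set.Icc.coe_zero (R := ℝ)]))
    · simp only [lowerRightPath_of_ge h, Set.Icc.coe_one] at hs
      exact Or.inr (Subtype.ext (by linarith [Set.Icc.coe_one (R := ℝ)]))

theorem isQuotientMap_sweep : IsQuotientMap sweep :=
  sweep.continuous.isClosedMap.isQuotientMap sweep.continuous sweep_surjective

theorem exists_square_filling {Y : Type*} [TopologicalSpace Y] [SimplyConnectedSpace Y]
    {g : I × I → Y} (hg : ContinuousOn g squareBoundary) :
    ∃ F : C(I × I, Y), Set.EqOn F g squareBoundary := by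
  obtain ⟨H⟩ := SimplyConnectedSpace.paths_homotopic
    (upperLeftPath.map' (hg.mono (Set.range_subset_iff.2 upperLeftPath_mem_squareBoundary)))
    (lowerRightPath.map' (hg.mono (Set.range_subset_iff.2 lowerRightPath_mem_squareBoundary)))
  have hfactors : Function.FactorsThrough H.toContinuousMap sweep := by
    rintro ⟨t, s⟩ ⟨t', s'⟩ h
    obtain ⟨rfl, rfl | rfl | rfl⟩ := eq_or_eq_zero_or_eq_one_of_sweep_eq h
    · rfl
    · exact (H.source t).trans (H.source t').symm
    · exact (H.target t).trans (H.target t').symm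
  have hlift : ∀ q, isQuotientMap_sweep.lift H.toContinuousMap hfactors (sweep q) = H q :=
    fun q => DFunLike.congr_fun (isQuotientMap_sweep.lift_comp H.toContinuousMap hfactors) q
  refine ⟨isQuotientMap_sweep.lift H.toContinuousMap hfactors, fun p hp => ?_⟩
  obtain ⟨s, rfl | rfl⟩ := exists_path_eq_of_mem_squareBoundary hp
  · rw [← sweep_one_left, hlift, H.apply_one, sweep_one_left]; rfl
  · rw [← sweep_zero_left, hlift, H.apply_zero, sweep_zero_left]; rfl

end SquareFilling

section NearOptimal

open unitInterval

theorem exists_mem_forall_dist_apply_le {K : Type*} [TopologicalSpace K] [CompactSpace K]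
    [Nonempty K] {𝓕 : Set C(K, X)} (h𝓕 : 𝓕.Nonempty) (y : X) {η : ℝ} (hη : 0 < η) :
    ∃ φ ∈ 𝓕, ∀ ψ ∈ 𝓕, ∀ r, (∀ t, dist (ψ t) y ≤ r) → ∀ t, dist (φ t) y ≤ r + η := by
  obtain ⟨φ, hφ, hlt⟩ :=
    (Metric.infDist_lt_iff (x := ContinuousMap.const K y) h𝓕).1 (lt_add_of_pos_right _ hη)
  refine ⟨φ, hφ, fun ψ hψ r hr t => ?_⟩
  have hψr : dist (ContinuousMap.const K y) ψ ≤ r :=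
    ContinuousMap.dist_le_iff_of_nonempty.2 fun t => dist_comm (ψ t) y ▸ hr t
  calc dist (φ t) y
      ≤ dist (ContinuousMap.const K y) φ := by
        rw [dist_comm]
        exact ContinuousMap.dist_apply_le_dist (f := ContinuousMap.const K y) t
    _ ≤ r + η := by
        linarith [Metric.infDist_le_dist_of_mem (x := ContinuousMap.const K y) hψ]

/-- Up to `η`, a path from `y` to `z` stays as close to `y` as any path connected set containing
`y` and `z` does. -/
def IsNearOptimalPath {y z : X} (c : Path y z) (η : ℝ) : Prop :=
  ∀ (V : Set X) (r : ℝ), IsPathConnected V → y ∈ V → z ∈ V → (∀ v ∈ V, dist v y ≤ r) →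
    ∀ t, dist (c t) y ≤ r + η

/-- Up to `η`, a map of the unit square stays as close to `y` as any simply connected set containing
its values on the boundary does. -/
def IsNearOptimalFilling (F : C(I × I, X)) (y : X) (η : ℝ) : Prop :=
  ∀ (V : Set X) (r : ℝ), IsSimplyConnected V → Set.MapsTo F squareBoundary V →
    (∀ v ∈ V, dist v y ≤ r) → ∀ p, dist (F p) y ≤ r + η

theorem exists_isNearOptimalPath [PathConnectedSpace X] (y z : X) {η : ℝ} (hη : 0 < η) :
    ∃ c : Path y z, IsNearOptimalPath c η := by
  obtain ⟨_, ⟨c, rfl⟩, hc⟩ := exists_mem_forall_dist_apply_le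
    (𝓕 := Set.range (Path.toContinuousMap : Path y z → C(I, X)))
    ⟨_, PathConnectedSpace.somePath y z, rfl⟩ y hη
  refine ⟨c, fun V r hV hy hz hr => ?_⟩
  have hjoined := hV.joinedIn y hy z hz
  exact hc _ ⟨hjoined.somePath, rfl⟩ r fun t => hr _ (hjoined.somePath_mem t)

theorem exists_isNearOptimalFilling [SimplyConnectedSpace X] {g : I × I → X}
    (hg : ContinuousOn g squareBoundary) (y : X) {η : ℝ} (hη : 0 < η) :
    ∃ F : C(I × I, X), Set.EqOn F g squareBoundary ∧ IsNearOptimalFilling F y η := by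
  obtain ⟨F, hFg, hF⟩ := exists_mem_forall_dist_apply_le
    (𝓕 := {F : C(I × I, X) | Set.EqOn F g squareBoundary}) (exists_square_filling hg) y hη
  refine ⟨F, hFg, fun V r hV hFV hr => ?_⟩
  have hgV : Set.MapsTo g squareBoundary V := hFV.congr hFg
  have : SimplyConnectedSpace V := hV
  obtain ⟨v⟩ := (inferInstance : Nonempty V)
  let gV : I × I → V := fun p => if h : g p ∈ V then ⟨g p, h⟩ else v
  have hgV_eq : Set.EqOn (fun p => (gV p : X)) g squareBoundary := fun p hp => by
    simp [gV, hgV hp]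
  have hgV_cont : ContinuousOn gV squareBoundary :=
    IsEmbedding.subtypeVal.isInducing.continuousOn_iff.2 (hg.congr hgV_eq)
  obtain ⟨G, hG⟩ := exists_square_filling hgV_cont
  refine hF ⟨fun p => G p, by fun_prop⟩ (fun p hp => ?_) r fun p => hr _ (G p).2
  change (G p : X) = g p
  rw [hG hp]
  exact hgV_eq hp

end NearOptimal

section Zigzag

variable {Y : Type*} [TopologicalSpace Y]

/-- The bi-infinite concatenation of the paths `c (W m) (W (m + 1))`, the `m`-th of them being
traversed on `[m, m + 1]`. -/
def zigzag (c : ∀ y z : Y, Path y z) (W : ℤ → Y) (t : ℝ) : Y :=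
  c (W ⌊t⌋) (W (⌊t⌋ + 1)) ⟨Int.fract t, unitInterval.fract_mem t⟩

theorem zigzag_intCast (c : ∀ y z : Y, Path y z) (W : ℤ → Y) (m : ℤ) : zigzag c W m = W m := by
  simp [zigzag]

theorem zigzag_eqOn (c : ∀ y z : Y, Path y z) (W : ℤ → Y) (m : ℤ) :
    Set.EqOn (zigzag c W) (fun t => (c (W m) (W (m + 1))).extend (t - m))
      (Set.Icc (m : ℝ) (m + 1)) := by
  rintro t ⟨hmt, htm⟩
  rcases htm.eq_or_lt with rfl | hlt
  · have := zigzag_intCast c W (m + 1)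
    push_cast at this
    simp [this]
  · obtain rfl : ⌊t⌋ = m := Int.floor_eq_iff.2 ⟨hmt, hlt⟩
    exact (Path.extend_apply _ (unitInterval.fract_mem t)).symm

theorem locallyFinite_Icc_intCast : LocallyFinite fun m : ℤ => Set.Icc (m : ℝ) (m + 1) := by
  intro t
  refine ⟨Set.Ioo (t - 1) (t + 1), Ioo_mem_nhds (by linarith) (by linarith),
    (Set.finite_Icc (⌊t⌋ - 2) (⌊t⌋ + 2)).subset ?_⟩
  rintro m ⟨s, ⟨hms, hsm⟩, hts, hst⟩
  have := Int.floor_le t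
  have := Int.lt_floor_add_one t
  constructor
  · have : (⌊t⌋ : ℝ) - 2 < m := by linarith
    exact_mod_cast this.le
  · have : (m : ℝ) < ⌊t⌋ + 2 := by linarith
    exact_mod_cast this.le

theorem continuous_zigzag (c : ∀ y z : Y, Path y z) (W : ℤ → Y) : Continuous (zigzag c W) := by
  refine locallyFinite_Icc_intCast.continuous (iUnion_Icc_intCast ℝ) (fun _ => isClosed_Icc)
    fun m => ?_
  refine ContinuousOn.congr (Continuous.continuousOn ?_) (zigzag_eqOn c W m)
  exact (Path.continuous_extend _).comp (by fun_prop)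

end Zigzag

section DyadicIntervals

/-- `x` is an integer multiple of `2⁻ᵏ`. -/
def IsDyadic (k : ℕ) (x : ℝ) : Prop := ∃ m : ℤ, 2 ^ k * x = m

/-- The closed dyadic interval `[i / 2ᵏ, (i + 1) / 2ᵏ]`. -/
def dyadicInterval (k : ℕ) (i : ℤ) : Set ℝ := (fun x => 2 ^ k * x) ⁻¹' Set.Icc (i : ℝ) (i + 1)

variable {k l : ℕ} {i j : ℤ} {x y : ℝ}

theorem IsDyadic.mono (hx : IsDyadic k x) (hkl : k ≤ l) : IsDyadic l x := by
  obtain ⟨m, hm⟩ := hx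
  obtain ⟨n, rfl⟩ := Nat.exists_eq_add_of_le hkl
  exact ⟨2 ^ n * m, by push_cast; rw [← hm]; ring⟩

theorem mem_dyadicInterval_floor (k : ℕ) (x : ℝ) : x ∈ dyadicInterval k ⌊2 ^ k * x⌋ :=
  ⟨Int.floor_le _, (Int.lt_floor_add_one _).le⟩

theorem isClosed_dyadicInterval (k : ℕ) (i : ℤ) : IsClosed (dyadicInterval k i) :=
  isClosed_Icc.preimage (by fun_prop)

theorem two_pow_mul_dist_le_one (hx : x ∈ dyadicInterval k i) (hy : y ∈ dyadicInterval k i) :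
    2 ^ k * dist x y ≤ 1 := by
  have h2k : (0 : ℝ) < 2 ^ k := by positivity
  rw [Real.dist_eq, ← abs_of_pos h2k, ← abs_mul, abs_le]
  constructor <;> linarith [hx.1, hx.2, hy.1, hy.2]

theorem mem_Ioo_of_mem_dyadicInterval (hx : x ∈ dyadicInterval k i) (hdy : ¬IsDyadic k x) :
    2 ^ k * x ∈ Set.Ioo (i : ℝ) (i + 1) := by
  refine ⟨hx.1.lt_of_ne fun h => hdy ⟨i, h.symm⟩, hx.2.lt_of_ne fun h => hdy ⟨i + 1, ?_⟩⟩
  push_cast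
  exact h

theorem floor_eq_of_mem_dyadicInterval (hx : x ∈ dyadicInterval k i) (hdy : ¬IsDyadic k x) :
    ⌊2 ^ k * x⌋ = i :=
  Int.floor_eq_iff.2 ⟨hx.1, (mem_Ioo_of_mem_dyadicInterval hx hdy).2⟩

theorem dyadicInterval_subset (hlk : l ≤ k) (hxk : x ∈ dyadicInterval k i)
    (hxl : x ∈ dyadicInterval l j) (hdy : ¬IsDyadic l x) :
    dyadicInterval k i ⊆ dyadicInterval l j := by
  obtain ⟨n, rfl⟩ := Nat.exists_eq_add_of_le hlk
  obtain ⟨hjx, hxj⟩ := mem_Ioo_of_mem_dyadicInterval hxl hdy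
  have h2n : (0 : ℝ) < 2 ^ n := by positivity
  have hsplit (y : ℝ) : 2 ^ (l + n) * y = 2 ^ n * (2 ^ l * y) := by ring
  obtain ⟨hix, hxi⟩ := hxk
  simp only [hsplit] at hix hxi
  have hji : 2 ^ n * j < i + 1 := by
    have : (2 ^ n * j : ℝ) < i + 1 := (mul_lt_mul_of_pos_left hjx h2n).trans_le hxi
    exact_mod_cast this
  have hij : i < 2 ^ n * (j + 1) := by
    have : (i : ℝ) < 2 ^ n * (j + 1) := hix.trans_lt (mul_lt_mul_of_pos_left hxj h2n)
    exact_mod_cast this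
  have hji' : (2 ^ n * j : ℝ) ≤ i := by exact_mod_cast Int.lt_add_one_iff.1 hji
  have hij' : (i + 1 : ℝ) ≤ 2 ^ n * (j + 1) := by exact_mod_cast Int.add_one_le_iff.2 hij
  rintro y ⟨hiy, hyi⟩
  simp only [hsplit] at hiy hyi
  exact ⟨le_of_mul_le_mul_left (hji'.trans hiy) h2n, le_of_mul_le_mul_left (hyi.trans hij') h2n⟩

theorem dyadicInterval_succ_subset (k : ℕ) (i : ℤ) :
    dyadicInterval (k + 1) i ⊆ dyadicInterval k (i / 2) := by
  have hlow : (2 * (i / 2 : ℤ) : ℝ) ≤ i := by exact_mod_cast (by omega : 2 * (i / 2) ≤ i)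
  have hup : (i : ℝ) + 1 ≤ 2 * (i / 2 : ℤ) + 2 := by
    exact_mod_cast (by omega : i + 1 ≤ 2 * (i / 2) + 2)
  rintro x ⟨hix, hxi⟩
  simp only [pow_succ] at hix hxi
  constructor <;> linarith

theorem finite_dyadicInterval_inter_Icc (k : ℕ) (a b : ℝ) :
    {i | (dyadicInterval k i ∩ Set.Icc a b).Nonempty}.Finite := by
  refine (Set.finite_Icc (⌊2 ^ k * a⌋ - 1) ⌈2 ^ k * b⌉).subset ?_
  rintro i ⟨x, ⟨hix, hxi⟩, hax, hxb⟩
  have h2k : (0 : ℝ) < 2 ^ k := by positivity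
  constructor
  · have : (⌊2 ^ k * a⌋ : ℝ) ≤ i + 1 :=
      (Int.floor_le _).trans ((mul_le_mul_of_nonneg_left hax h2k.le).trans hxi)
    have : ⌊2 ^ k * a⌋ ≤ i + 1 := by exact_mod_cast this
    omega
  · have : (i : ℝ) ≤ ⌈2 ^ k * b⌉ :=
      hix.trans ((mul_le_mul_of_nonneg_left hxb h2k.le).trans (Int.le_ceil _))
    exact_mod_cast this

/-- The affine coordinate on `dyadicInterval k i`, extended to be constant on both sides of it. -/
def dyadicCoord (k : ℕ) (i : ℤ) (x : ℝ) : unitInterval :=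
  Set.projIcc 0 1 zero_le_one (2 ^ k * x - i)

theorem continuous_dyadicCoord (k : ℕ) (i : ℤ) : Continuous (dyadicCoord k i) :=
  continuous_projIcc.comp (by fun_prop)

theorem coe_dyadicCoord (hx : x ∈ dyadicInterval k i) :
    (dyadicCoord k i x : ℝ) = 2 ^ k * x - i := by
  have : 2 ^ k * x - i ∈ Set.Icc (0 : ℝ) 1 := by constructor <;> linarith [hx.1, hx.2]
  rw [dyadicCoord, Set.projIcc_of_mem _ this]

theorem IsDyadic.dyadicCoord_eq_zero_or_one (hdy : IsDyadic k x) (hx : x ∈ dyadicInterval k i) :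
    dyadicCoord k i x = 0 ∨ dyadicCoord k i x = 1 := by
  obtain ⟨m, hm⟩ := hdy
  obtain ⟨him, hmi⟩ : i ≤ m ∧ m ≤ i + 1 := by
    obtain ⟨him, hmi⟩ := hx
    simp only [hm] at him hmi
    exact_mod_cast And.intro him hmi
  obtain rfl | rfl : m = i ∨ m = i + 1 := by omega
  · left
    ext
    simp [coe_dyadicCoord hx, hm]
  · right
    ext
    simp [coe_dyadicCoord hx, hm]

end DyadicIntervals

/-- The closed dyadic square with lower left corner `(col, row) / 2 ^ level` and side
`2 ^ (-level)`. -/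
structure DyadicSquare where
  /-- The side is `2 ^ (-level)`. -/
  level : ℕ
  /-- The first coordinate of the lower left corner, in units of the side. -/
  col : ℤ
  /-- The second coordinate of the lower left corner, in units of the side. -/
  row : ℤ

namespace DyadicSquare

open unitInterval

/-- The points of a dyadic square. -/
def carrier (S : DyadicSquare) : Set (ℝ × ℝ) :=
  dyadicInterval S.level S.col ×ˢ dyadicInterval S.level S.row

variable {S T : DyadicSquare} {A : Set (ℝ × ℝ)} {z w : ℝ × ℝ}

theorem isClosed_carrier (S : DyadicSquare) : IsClosed S.carrier :=
  (isClosed_dyadicInterval _ _).prod (isClosed_dyadicInterval _ _)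

theorem two_pow_mul_dist_le_one (hz : z ∈ S.carrier) (hw : w ∈ S.carrier) :
    2 ^ S.level * dist z w ≤ 1 := by
  rw [Prod.dist_eq, mul_max_of_nonneg _ _ (by positivity)]
  exact max_le (EarringPaper.two_pow_mul_dist_le_one hz.1 hw.1)
    (EarringPaper.two_pow_mul_dist_le_one hz.2 hw.2)

theorem exists_mem_carrier (k : ℕ) (z : ℝ × ℝ) : ∃ S : DyadicSquare, S.level = k ∧ z ∈ S.carrier :=
  ⟨⟨k, ⌊2 ^ k * z.1⌋, ⌊2 ^ k * z.2⌋⟩, rfl, mem_dyadicInterval_floor k z.1,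
    mem_dyadicInterval_floor k z.2⟩

/-- The affine parametrization of a dyadic square by the unit square. -/
def point (S : DyadicSquare) (p : I × I) : ℝ × ℝ :=
  ((S.col + p.1) / 2 ^ S.level, (S.row + p.2) / 2 ^ S.level)

/-- Inverse of `point` on a dyadic square, extended continuously to the plane. -/
def localCoord (S : DyadicSquare) (z : ℝ × ℝ) : I × I :=
  (dyadicCoord S.level S.col z.1, dyadicCoord S.level S.row z.2)

theorem continuous_point (S : DyadicSquare) : Continuous S.point := by
  unfold point
  fun_prop

theorem continuous_localCoord (S : DyadicSquare) : Continuous S.localCoord :=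
  ((continuous_dyadicCoord _ _).comp continuous_fst).prodMk
    ((continuous_dyadicCoord _ _).comp continuous_snd)

theorem point_mem (S : DyadicSquare) (p : I × I) : S.point p ∈ S.carrier := by
  have hmem (i : ℤ) (t : I) : (i + t : ℝ) / 2 ^ S.level ∈ dyadicInterval S.level i := by
    have h2k : (2 : ℝ) ^ S.level ≠ 0 := by positivity
    change 2 ^ S.level * ((i + t : ℝ) / 2 ^ S.level) ∈ Set.Icc (i : ℝ) (i + 1)
    rw [mul_div_cancel₀ _ h2k]
    constructor <;> linarith [t.2.1, t.2.2]
  exact ⟨hmem _ _, hmem _ _⟩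

theorem point_localCoord (hz : z ∈ S.carrier) : S.point (S.localCoord z) = z := by
  ext
  · simp [point, localCoord, coe_dyadicCoord hz.1]
  · simp [point, localCoord, coe_dyadicCoord hz.2]

theorem localCoord_mem_squareBoundary (hz : z ∈ S.carrier)
    (hdy : IsDyadic S.level z.1 ∨ IsDyadic S.level z.2) : S.localCoord z ∈ squareBoundary := by
  rcases hdy with hdy | hdy
  · rcases hdy.dyadicCoord_eq_zero_or_one hz.1 with h | h
    · exact Or.inl h
    · exact Or.inr (Or.inl h)
  · rcases hdy.dyadicCoord_eq_zero_or_one hz.2 with h | h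
    · exact Or.inr (Or.inr (Or.inl h))
    · exact Or.inr (Or.inr (Or.inr h))

/-- A dyadic square is good for `A` if its distance from `A` exceeds its side. -/
def IsGood (A : Set (ℝ × ℝ)) (S : DyadicSquare) : Prop :=
  ∀ z ∈ S.carrier, ∀ a ∈ A, 1 < 2 ^ S.level * dist z a

/-- The Whitney squares of the complement of `A` are the maximal good dyadic squares. -/
def IsWhitney (A : Set (ℝ × ℝ)) (S : DyadicSquare) : Prop :=
  IsGood A S ∧ ∀ T, T.level < S.level → IsGood A T → ¬S.carrier ⊆ T.carrier

/-- The least level of a good dyadic square containing `z` (and `0` if there is none, that is, if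
`z` is in the closure of `A`). -/
def goodLevel (A : Set (ℝ × ℝ)) (z : ℝ × ℝ) : ℕ :=
  sInf {k | ∃ S : DyadicSquare, S.level = k ∧ IsGood A S ∧ z ∈ S.carrier}

theorem IsGood.goodLevel_le (hS : IsGood A S) (hz : z ∈ S.carrier) : goodLevel A z ≤ S.level :=
  Nat.sInf_le ⟨S, rfl, hS, hz⟩

theorem IsGood.exists_level_eq_goodLevel (hS : IsGood A S) (hz : z ∈ S.carrier) :
    ∃ T : DyadicSquare, T.level = goodLevel A z ∧ IsGood A T ∧ z ∈ T.carrier :=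
  Nat.sInf_mem (s := {k | ∃ S : DyadicSquare, S.level = k ∧ IsGood A S ∧ z ∈ S.carrier})
    ⟨S.level, S, rfl, hS, hz⟩

theorem exists_isGood (hA : IsClosed A) (hz : z ∉ A) : ∃ S, IsGood A S ∧ z ∈ S.carrier := by
  obtain ⟨ε, hε, hball⟩ := Metric.isOpen_iff.1 hA.isOpen_compl z hz
  obtain ⟨k, hk⟩ := pow_unbounded_of_one_lt (2 / ε) one_lt_two
  rw [div_lt_iff₀ hε] at hk
  obtain ⟨S, rfl, hzS⟩ := exists_mem_carrier k z
  refine ⟨S, fun w hw a ha => ?_, hzS⟩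
  have hεa : ε ≤ dist z a := by
    by_contra! h
    exact hball (Metric.mem_ball'.2 h) ha
  nlinarith [pow_pos (zero_lt_two' ℝ) S.level, two_pow_mul_dist_le_one hzS hw, dist_triangle z w a]

theorem exists_isWhitney (hA : IsClosed A) (hz : z ∉ A) : ∃ S, IsWhitney A S ∧ z ∈ S.carrier := by
  obtain ⟨S, hS, hzS⟩ := exists_isGood hA hz
  obtain ⟨T, hT, hTgood, hzT⟩ := hS.exists_level_eq_goodLevel hzS
  refine ⟨T, ⟨hTgood, fun T' hlt hgood hsub => ?_⟩, hzT⟩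
  exact (hgood.goodLevel_le (hsub hzT)).not_gt (hT ▸ hlt)

theorem exists_carrier_subset_of_level_eq_succ {k : ℕ} (hS : S.level = k + 1) :
    ∃ T : DyadicSquare, T.level = k ∧ S.carrier ⊆ T.carrier := by
  obtain ⟨_, i, j⟩ := S
  obtain rfl := hS
  exact ⟨⟨k, i / 2, j / 2⟩, rfl,
    Set.prod_mono (dyadicInterval_succ_subset k i) (dyadicInterval_succ_subset k j)⟩

theorem IsWhitney.exists_two_pow_mul_dist_le (hS : IsWhitney A S) (h0 : S.level ≠ 0)
    (hz : z ∈ S.carrier) : ∃ a ∈ A, 2 ^ S.level * dist z a ≤ 4 := by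
  obtain ⟨k, hk⟩ := Nat.exists_eq_succ_of_ne_zero h0
  obtain ⟨T, rfl, hST⟩ := exists_carrier_subset_of_level_eq_succ hk
  have hT : ¬IsGood A T := fun h => hS.2 T (by omega) h hST
  simp only [IsGood, not_forall, not_lt] at hT
  obtain ⟨w, hw, a, ha, hwa⟩ := hT
  refine ⟨a, ha, ?_⟩
  rw [hk, Nat.succ_eq_add_one, pow_succ]
  nlinarith [pow_pos (zero_lt_two' ℝ) T.level, two_pow_mul_dist_le_one (hST hz) hw,
    dist_triangle z w a]

theorem IsWhitney.level_le (hS : IsWhitney A S) (hz : z ∈ S.carrier) :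
    S.level ≤ goodLevel A z + 1 := by
  by_contra! hlt
  obtain ⟨a, ha, hza⟩ := hS.exists_two_pow_mul_dist_le (by omega) hz
  obtain ⟨T, hT, hTgood, hzT⟩ := hS.1.exists_level_eq_goodLevel hz
  have hpow : (4 : ℝ) * 2 ^ T.level ≤ 2 ^ S.level :=
    calc (4 : ℝ) * 2 ^ T.level = 2 ^ (T.level + 2) := by ring
      _ ≤ 2 ^ S.level := pow_le_pow_right₀ one_le_two (by omega)
  nlinarith [hTgood z hzT a ha, dist_nonneg (x := z) (y := a)]

theorem carrier_subset (hle : T.level ≤ S.level) (hzS : z ∈ S.carrier) (hzT : z ∈ T.carrier)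
    (h₁ : ¬IsDyadic T.level z.1) (h₂ : ¬IsDyadic T.level z.2) : S.carrier ⊆ T.carrier :=
  Set.prod_mono (dyadicInterval_subset hle hzS.1 hzT.1 h₁)
    (dyadicInterval_subset hle hzS.2 hzT.2 h₂)

theorem IsWhitney.eq_of_mem (hS : IsWhitney A S) (hT : IsWhitney A T) (hzS : z ∈ S.carrier)
    (hzT : z ∈ T.carrier) (h₁ : ¬IsDyadic S.level z.1) (h₂ : ¬IsDyadic S.level z.2) : S = T := by
  rcases lt_trichotomy S.level T.level with hlt | heq | hlt
  · exact absurd (carrier_subset hlt.le hzT hzS h₁ h₂) (hT.2 S hlt hS.1)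
  · obtain ⟨k, i, j⟩ := S
    obtain ⟨_, i', j'⟩ := T
    obtain rfl := heq
    obtain rfl : i = i' := (floor_eq_of_mem_dyadicInterval hzS.1 h₁).symm.trans
      (floor_eq_of_mem_dyadicInterval hzT.1 h₁)
    obtain rfl : j = j' := (floor_eq_of_mem_dyadicInterval hzS.2 h₂).symm.trans
      (floor_eq_of_mem_dyadicInterval hzT.2 h₂)
    rfl
  · exact absurd (carrier_subset hlt.le hzS hzT (mt (IsDyadic.mono · hlt.le) h₁)
      (mt (IsDyadic.mono · hlt.le) h₂)) (hS.2 T hlt hT.1)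

theorem exists_level_le_of_isWhitney (hA : IsClosed A) (hz : z ∉ A) :
    ∃ r > 0, ∃ K, ∀ S, IsWhitney A S → (S.carrier ∩ Metric.closedBall z r).Nonempty →
      S.level ≤ K := by
  obtain ⟨ε, hε, hball⟩ := Metric.isOpen_iff.1 hA.isOpen_compl z hz
  obtain ⟨K, hK⟩ := pow_unbounded_of_one_lt (8 / ε) one_lt_two
  rw [div_lt_iff₀ hε] at hK
  refine ⟨ε / 2, half_pos hε, K, ?_⟩
  rintro S hS ⟨w, hwS, hwz⟩
  by_contra! hlt
  obtain ⟨a, ha, hwa⟩ := hS.exists_two_pow_mul_dist_le (by omega) hwS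
  have hεa : ε ≤ dist z a := by
    by_contra! h
    exact hball (Metric.mem_ball'.2 h) ha
  have hpow : (2 : ℝ) ^ K < 2 ^ S.level := pow_lt_pow_right₀ one_lt_two hlt
  have hhalf : ε / 2 ≤ dist w a := by
    linarith [dist_triangle_left z a w, Metric.mem_closedBall.1 hwz]
  linarith [mul_le_mul hpow.le hhalf (by positivity) (by positivity)]

theorem locallyFinite_isWhitney (hA : IsClosed A) :
    LocallyFinite fun S : {S // IsWhitney A S} => ((↑) ⁻¹' S.1.carrier : Set ↥Aᶜ) := by
  rintro ⟨z, hz⟩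
  obtain ⟨r, hr, K, hK⟩ := exists_level_le_of_isWhitney hA hz
  refine ⟨(↑) ⁻¹' Metric.closedBall z r,
    continuous_subtype_val.continuousAt.preimage_mem_nhds (Metric.closedBall_mem_nhds z hr), ?_⟩
  let cols (x : ℝ) (k : ℕ) : Set ℤ :=
    {i | (dyadicInterval k i ∩ Set.Icc (x - r) (x + r)).Nonempty}
  have hfin : (⋃ k ∈ Set.Iic K, (fun p : ℤ × ℤ => DyadicSquare.mk k p.1 p.2) ''
      (cols z.1 k ×ˢ cols z.2 k)).Finite :=
    (Set.finite_Iic K).biUnion fun k _ => ((finite_dyadicInterval_inter_Icc k _ _).prod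
      (finite_dyadicInterval_inter_Icc k _ _)).image _
  refine (hfin.preimage Subtype.val_injective.injOn).subset ?_
  rintro ⟨S, hS⟩ ⟨⟨w, _⟩, hwS, hwz⟩
  have hwz' : w ∈ Metric.closedBall z.1 r ×ˢ Metric.closedBall z.2 r := by
    rwa [closedBall_prod_same]
  rw [Real.closedBall_eq_Icc, Real.closedBall_eq_Icc] at hwz'
  exact Set.mem_biUnion (hK S hS ⟨w, hwS, hwz⟩)
    ⟨(S.col, S.row), ⟨⟨w.1, hwS.1, hwz'.1⟩, w.2, hwS.2, hwz'.2⟩, rfl⟩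

end DyadicSquare

section Skeleton

open unitInterval

variable {Y : Type*} [TopologicalSpace Y]

/-- The map given on the grid of mesh `2⁻ʲ` by the paths `c j` between the values of `V` at adjacent
vertices; its values off the grid are irrelevant. -/
def gridMap (c : ℕ → ∀ y z : Y, Path y z) (V : ℝ × ℝ → Y) (j : ℕ) (z : ℝ × ℝ) : Y :=
  if IsDyadic j z.2 then zigzag (c j) (fun i => V (i / 2 ^ j, z.2)) (2 ^ j * z.1)
  else zigzag (c j) (fun i => V (z.1, i / 2 ^ j)) (2 ^ j * z.2)

/-- The map on the union of the sides of the Whitney squares of the complement of `A`. As adjacent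
Whitney squares differ by at most one level, the paths `c` are used between points that are
vertices for the finer one. -/
def skeletonMap (A : Set (ℝ × ℝ)) (c : ℕ → ∀ y z : Y, Path y z) (V : ℝ × ℝ → Y) (z : ℝ × ℝ) : Y :=
  gridMap c V (DyadicSquare.goodLevel A z + 1) z

variable {c : ℕ → ∀ y z : Y, Path y z} {V : ℝ × ℝ → Y} {A : Set (ℝ × ℝ)} {j : ℕ} {z : ℝ × ℝ}

theorem gridMap_of_isDyadic_snd (h : IsDyadic j z.2) :
    gridMap c V j z = zigzag (c j) (fun i => V (i / 2 ^ j, z.2)) (2 ^ j * z.1) :=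
  if_pos h

theorem gridMap_of_isDyadic (h₁ : IsDyadic j z.1) (h₂ : IsDyadic j z.2) :
    gridMap c V j z = V z := by
  obtain ⟨m, hm⟩ := h₁
  have hz : (m : ℝ) / 2 ^ j = z.1 := by rw [← hm]; field_simp
  rw [gridMap_of_isDyadic_snd h₂, hm, zigzag_intCast, hz]

theorem gridMap_of_isDyadic_fst (h : IsDyadic j z.1) :
    gridMap c V j z = zigzag (c j) (fun i => V (z.1, i / 2 ^ j)) (2 ^ j * z.2) := by
  by_cases h₂ : IsDyadic j z.2
  · obtain ⟨n, hn⟩ := id h₂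
    have hz : (n : ℝ) / 2 ^ j = z.2 := by rw [← hn]; field_simp
    rw [gridMap_of_isDyadic h h₂, hn, zigzag_intCast, hz]
  · exact if_neg h₂

theorem continuousOn_gridMap_horizontal {y : ℝ} (hy : IsDyadic j y) :
    ContinuousOn (gridMap c V j) {z | z.2 = y} := by
  refine ContinuousOn.congr (f := fun z => zigzag (c j) (fun i => V (i / 2 ^ j, y)) (2 ^ j * z.1))
    ((continuous_zigzag _ _).comp (by fun_prop)).continuousOn ?_
  rintro z rfl
  exact gridMap_of_isDyadic_snd hy

theorem continuousOn_gridMap_vertical {x : ℝ} (hx : IsDyadic j x) :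
    ContinuousOn (gridMap c V j) {z | z.1 = x} := by
  refine ContinuousOn.congr (f := fun z => zigzag (c j) (fun i => V (x, i / 2 ^ j)) (2 ^ j * z.2))
    ((continuous_zigzag _ _).comp (by fun_prop)).continuousOn ?_
  rintro z rfl
  exact gridMap_of_isDyadic_fst hx

theorem exists_gridMap_eq_path (c : ℕ → ∀ y z : Y, Path y z) (V : ℝ × ℝ → Y) (j : ℕ) (z : ℝ × ℝ) :
    ∃ p q : ℝ × ℝ, 2 ^ j * dist p z ≤ 1 ∧ 2 ^ j * dist q z ≤ 1 ∧
      ∃ t, gridMap c V j z = c j (V p) (V q) t := by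
  have hdist (x : ℝ) : 2 ^ j * |(⌊2 ^ j * x⌋ / 2 ^ j : ℝ) - x| ≤ 1 ∧
      2 ^ j * |((⌊2 ^ j * x⌋ + 1 : ℤ) / 2 ^ j : ℝ) - x| ≤ 1 := by
    have hscale (m : ℤ) : 2 ^ j * |(m / 2 ^ j : ℝ) - x| = |m - 2 ^ j * x| := by
      have h2j : (0 : ℝ) < 2 ^ j := by positivity
      rw [← abs_of_pos h2j, ← abs_mul, abs_of_pos h2j, mul_sub, mul_div_cancel₀ _ h2j.ne']
    simp only [hscale, abs_le]
    push_cast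
    refine ⟨⟨?_, ?_⟩, ?_, ?_⟩ <;>
      linarith [Int.floor_le (2 ^ j * x), Int.lt_floor_add_one (2 ^ j * x)]
  unfold gridMap
  split_ifs
  · refine ⟨_, _, ?_, ?_, _, rfl⟩ <;>
      simp only [Prod.dist_eq, dist_self, Real.dist_eq, abs_nonneg, sup_of_le_left, hdist]
  · refine ⟨_, _, ?_, ?_, _, rfl⟩ <;>
      simp only [Prod.dist_eq, dist_self, Real.dist_eq, abs_nonneg, sup_of_le_right, hdist]

theorem skeletonMap_of_isDyadic {S : DyadicSquare} (hS : S.IsWhitney A) (hz : z ∈ S.carrier)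
    (h₁ : IsDyadic S.level z.1) (h₂ : IsDyadic S.level z.2) : skeletonMap A c V z = V z :=
  gridMap_of_isDyadic (h₁.mono (hS.level_le hz)) (h₂.mono (hS.level_le hz))

/-- A side `e` of a Whitney square `S` either lies in a good square of the previous level or has no
interior point in such a square, so the skeleton map is given on `e` by a single grid. -/
theorem exists_eqOn_skeletonMap_gridMap {S : DyadicSquare} (hS : S.IsWhitney A) {e : Set (ℝ × ℝ)}
    (he : e ⊆ S.carrier)
    (hsub : ∀ z ∈ e, ¬(IsDyadic S.level z.1 ∧ IsDyadic S.level z.2) → ∀ T : DyadicSquare,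
      T.level < S.level → z ∈ T.carrier → e ⊆ T.carrier) :
    ∃ k, S.level ≤ k ∧ Set.EqOn (skeletonMap A c V) (gridMap c V k) e := by
  by_cases h : ∃ z ∈ e, ¬(IsDyadic S.level z.1 ∧ IsDyadic S.level z.2) ∧
      DyadicSquare.goodLevel A z ≠ S.level
  · obtain ⟨z, hz, hdy, hlevel⟩ := h
    obtain ⟨T, hT, hTgood, hzT⟩ := hS.1.exists_level_eq_goodLevel (he hz)
    have hTS : T.level < S.level := hT ▸ (hS.1.goodLevel_le (he hz)).lt_of_ne hlevel
    refine ⟨S.level, le_rfl, fun w hw => ?_⟩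
    have hw_le := hS.level_le (he hw)
    have hw_ge := hTgood.goodLevel_le (hsub z hz hdy T hTS hzT hw)
    rw [skeletonMap, show DyadicSquare.goodLevel A w + 1 = S.level by omega]
  · push Not at h
    refine ⟨S.level + 1, Nat.le_succ _, fun z hz => ?_⟩
    by_cases hdy : IsDyadic S.level z.1 ∧ IsDyadic S.level z.2
    · rw [skeletonMap_of_isDyadic hS (he hz) hdy.1 hdy.2,
        gridMap_of_isDyadic (hdy.1.mono (Nat.le_succ _)) (hdy.2.mono (Nat.le_succ _))]
    · rw [skeletonMap, h z hz (not_and.1 hdy)]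

theorem continuousOn_skeletonMap_horizontal {S : DyadicSquare} (hS : S.IsWhitney A) {y : ℝ}
    (hy : IsDyadic S.level y) :
    ContinuousOn (skeletonMap A c V) (S.carrier ∩ {z | z.2 = y}) := by
  obtain ⟨k, hk, heq⟩ : ∃ k, S.level ≤ k ∧ Set.EqOn (skeletonMap A c V) (gridMap c V k)
      (S.carrier ∩ {z | z.2 = y}) := by
    refine exists_eqOn_skeletonMap_gridMap hS Set.inter_subset_left ?_
    rintro z ⟨hzS, rfl⟩ hdy T hTS hzT w ⟨hwS, hwz⟩
    have hx : ¬IsDyadic T.level z.1 := fun h => hdy ⟨h.mono hTS.le, hy⟩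
    exact ⟨dyadicInterval_subset hTS.le hzS.1 hzT.1 hx hwS.1,
      (congrArg (· ∈ dyadicInterval T.level T.row) hwz).mpr hzT.2⟩
  exact ((continuousOn_gridMap_horizontal (hy.mono hk)).mono Set.inter_subset_right).congr heq

theorem continuousOn_skeletonMap_vertical {S : DyadicSquare} (hS : S.IsWhitney A) {x : ℝ}
    (hx : IsDyadic S.level x) :
    ContinuousOn (skeletonMap A c V) (S.carrier ∩ {z | z.1 = x}) := by
  obtain ⟨k, hk, heq⟩ : ∃ k, S.level ≤ k ∧ Set.EqOn (skeletonMap A c V) (gridMap c V k)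
      (S.carrier ∩ {z | z.1 = x}) := by
    refine exists_eqOn_skeletonMap_gridMap hS Set.inter_subset_left ?_
    rintro z ⟨hzS, rfl⟩ hdy T hTS hzT w ⟨hwS, hwz⟩
    have hy : ¬IsDyadic T.level z.2 := fun h => hdy ⟨hx, h.mono hTS.le⟩
    exact ⟨(congrArg (· ∈ dyadicInterval T.level T.col) hwz).mpr hzT.1,
      dyadicInterval_subset hTS.le hzS.2 hzT.2 hy hwS.2⟩
  exact ((continuousOn_gridMap_vertical (hx.mono hk)).mono Set.inter_subset_right).congr heq

theorem isDyadic_intCast_add_div (k : ℕ) (i : ℤ) {t : ℝ} (ht : t = 0 ∨ t = 1) :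
    IsDyadic k ((i + t) / 2 ^ k) := by
  rcases ht with rfl | rfl
  · exact ⟨i, by field_simp; simp⟩
  · exact ⟨i + 1, by field_simp; simp⟩

theorem continuousOn_skeletonMap_point {S : DyadicSquare} (hS : S.IsWhitney A) :
    ContinuousOn (fun p => skeletonMap A c V (S.point p)) squareBoundary := by
  have hhor (b : I) (hb : b = 0 ∨ b = 1) :
      ContinuousOn (fun p => skeletonMap A c V (S.point p)) {p : I × I | p.2 = b} := by
    refine (continuousOn_skeletonMap_horizontal hS (isDyadic_intCast_add_div S.level S.row
      (t := b) (by simpa using hb))).comp S.continuous_point.continuousOn ?_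
    rintro p rfl
    exact ⟨S.point_mem p, rfl⟩
  have hver (b : I) (hb : b = 0 ∨ b = 1) :
      ContinuousOn (fun p => skeletonMap A c V (S.point p)) {p : I × I | p.1 = b} := by
    refine (continuousOn_skeletonMap_vertical hS (isDyadic_intCast_add_div S.level S.col
      (t := b) (by simpa using hb))).comp S.continuous_point.continuousOn ?_
    rintro p rfl
    exact ⟨S.point_mem p, rfl⟩
  have hfst (b : I) : IsClosed {p : I × I | p.1 = b} := isClosed_eq continuous_fst continuous_const
  have hsnd (b : I) : IsClosed {p : I × I | p.2 = b} := isClosed_eq continuous_snd continuous_const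
  exact (hver 0 (Or.inl rfl)).union_of_isClosed ((hver 1 (Or.inr rfl)).union_of_isClosed
    ((hhor 0 (Or.inl rfl)).union_of_isClosed (hhor 1 (Or.inr rfl)) (hsnd 0) (hsnd 1)) (hfst 1)
    ((hsnd 0).union (hsnd 1))) (hfst 0) ((hfst 1).union ((hsnd 0).union (hsnd 1)))

end Skeleton

section PlanarExtension

open unitInterval

variable {A : Set (ℝ × ℝ)} {z w : ℝ × ℝ}

theorem DyadicSquare.IsGood.carrier_subset_compl {S : DyadicSquare} (hS : S.IsGood A) :
    S.carrier ⊆ Aᶜ := fun w hw hwA => by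
  have := hS w hw w hwA
  rw [dist_self] at this
  linarith

theorem one_lt_two_pow_goodLevel_mul_dist (hA : IsClosed A) (hw : w ∉ A) (hz : z ∈ A) :
    1 < 2 ^ DyadicSquare.goodLevel A w * dist w z := by
  obtain ⟨S, hS, hwS⟩ := DyadicSquare.exists_isGood hA hw
  obtain ⟨T, hT, hTgood, hwT⟩ := hS.exists_level_eq_goodLevel hwS
  exact hT ▸ hTgood w hwT z hz

theorem tendsto_skeletonMap (hlsc : LocSimplyConnected X) (hA : IsClosed A)
    {c : ℕ → ∀ y y' : X, Path y y'} (hc : ∀ j y y', IsNearOptimalPath (c j y y') (1 / 2 ^ j))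
    {V : ℝ × ℝ → X} (hz : z ∈ A) {x : X} (hV : Tendsto V (𝓝 z) (𝓝 x)) :
    Tendsto (skeletonMap A c V) (𝓝[Aᶜ] z) (𝓝 x) := by
  rw [Metric.tendsto_nhdsWithin_nhds]
  intro ε hε
  obtain ⟨U, hU, hUball, _⟩ := hlsc x _ (Metric.ball_mem_nhds x (show 0 < ε / 4 by positivity))
  obtain ⟨δ, hδ, hVU⟩ := Metric.mem_nhds_iff.1 (hV hU)
  refine ⟨min (δ / 2) (ε / 4), by positivity, fun w hw hwz => ?_⟩
  obtain ⟨hwδ, hwε⟩ := lt_min_iff.1 hwz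
  set j := DyadicSquare.goodLevel A w + 1 with hj
  obtain ⟨p, q, hp, hq, t, ht⟩ := exists_gridMap_eq_path c V j w
  have hscale : 1 / 2 ^ j < dist w z := by
    rw [div_lt_iff₀ (by positivity), mul_comm, hj, pow_succ]
    linarith [one_lt_two_pow_goodLevel_mul_dist hA hw hz]
  rw [mul_comm, ← le_div_iff₀ (by positivity)] at hp hq
  have hmem (p : ℝ × ℝ) (hp : dist p w ≤ 1 / 2 ^ j) : V p ∈ U :=
    hVU (Metric.mem_ball.2 (by linarith [dist_triangle p w z]))
  have hUp : ∀ v ∈ U, dist v (V p) ≤ ε / 2 := fun v hv => by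
    linarith [dist_triangle_right v (V p) x, Metric.mem_ball.1 (hUball hv),
      Metric.mem_ball.1 (hUball (hmem p hp))]
  have hpath := hc j _ _ U _ (isPathConnected_iff_pathConnectedSpace.2 inferInstance)
    (hmem p hp) (hmem q hq) hUp t
  rw [skeletonMap, ← hj, ht]
  linarith [dist_triangle (c j (V p) (V q) t) (V p) x, Metric.mem_ball.1 (hUball (hmem p hp))]

theorem exists_continuousOn_eqOn_whitney {Y : Type*} [TopologicalSpace Y] (hA : IsClosed A)
    {φ : ℝ × ℝ → Y} {G : DyadicSquare → C(I × I, Y)}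
    (hG : ∀ S, S.IsWhitney A → Set.EqOn (G S) (fun p => φ (S.point p)) squareBoundary) :
    ∃ F : ℝ × ℝ → Y, ContinuousOn F Aᶜ ∧
      ∀ S, S.IsWhitney A → Set.EqOn F (fun z => G S (S.localCoord z)) S.carrier := by
  have : Nonempty DyadicSquare := ⟨⟨0, 0, 0⟩⟩
  choose! T hT hzT using fun z (hz : z ∉ A) => DyadicSquare.exists_isWhitney hA hz
  have hagree {z : ℝ × ℝ} {S S' : DyadicSquare} (hS : S.IsWhitney A) (hS' : S'.IsWhitney A)
      (hz : z ∈ S.carrier) (hz' : z ∈ S'.carrier) (hne : S ≠ S') :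
      G S (S.localCoord z) = φ z := by
    have hdy : IsDyadic S.level z.1 ∨ IsDyadic S.level z.2 := by
      by_contra! h
      exact hne (hS.eq_of_mem hS' hz hz' h.1 h.2)
    simpa only [DyadicSquare.point_localCoord hz] using
      hG S hS (DyadicSquare.localCoord_mem_squareBoundary hz hdy)
  have heq (S : DyadicSquare) (hS : S.IsWhitney A) :
      Set.EqOn (fun z => G (T z) ((T z).localCoord z)) (fun z => G S (S.localCoord z))
        S.carrier := by
    intro z hz
    have hzA := hS.1.carrier_subset_compl hz
    by_cases hne : T z = S
    · simp only [hne]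
    · exact (hagree (hT z hzA) hS (hzT z hzA) hz hne).trans
        (hagree hS (hT z hzA) hz (hzT z hzA) (Ne.symm hne)).symm
  refine ⟨fun z => G (T z) ((T z).localCoord z), ?_, heq⟩
  rw [continuousOn_iff_continuous_domRestrict]
  refine (DyadicSquare.locallyFinite_isWhitney hA).continuous ?_
    (fun S => S.1.isClosed_carrier.preimage continuous_subtype_val) fun S => ?_
  · exact Set.eq_univ_of_forall fun z => Set.mem_iUnion.2 ⟨⟨T z, hT z z.2⟩, hzT z z.2⟩
  · exact (((G S.1).continuous.comp (S.1.continuous_localCoord.comp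
      continuous_subtype_val)).continuousOn).congr fun z hz => heq S.1 S.2 hz

theorem tendsto_of_isNearOptimalFilling (hlsc : LocSimplyConnected X) (hA : IsClosed A)
    {φ F : ℝ × ℝ → X} {G : DyadicSquare → C(I × I, X)}
    (hG : ∀ S, S.IsWhitney A → Set.EqOn (G S) (fun p => φ (S.point p)) squareBoundary)
    (hG' : ∀ S, S.IsWhitney A → IsNearOptimalFilling (G S) (φ (S.point 0)) (1 / 2 ^ S.level))
    (hF : ∀ S, S.IsWhitney A → Set.EqOn F (fun z => G S (S.localCoord z)) S.carrier)
    (hz : z ∈ A) {x : X} (hφ : Tendsto φ (𝓝[Aᶜ] z) (𝓝 x)) :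
    Tendsto F (𝓝[Aᶜ] z) (𝓝 x) := by
  rw [Metric.tendsto_nhdsWithin_nhds]
  intro ε hε
  obtain ⟨U, hU, hUball, hUsc⟩ :=
    hlsc x _ (Metric.ball_mem_nhds x (show 0 < ε / 4 by positivity))
  obtain ⟨δ, hδ, hφU⟩ := Metric.mem_nhdsWithin_iff.1 (hφ hU)
  refine ⟨min (δ / 2) (ε / 4), by positivity, fun w hw hwz => ?_⟩
  obtain ⟨hwδ, hwε⟩ := lt_min_iff.1 hwz
  obtain ⟨S, hS, hwS⟩ := DyadicSquare.exists_isWhitney hA hw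
  have hside : 1 / 2 ^ S.level < dist w z := by
    rw [div_lt_iff₀ (by positivity), mul_comm]
    exact hS.1 w hwS z hz
  have hmem (p : I × I) : φ (S.point p) ∈ U := by
    have hpw := DyadicSquare.two_pow_mul_dist_le_one (S.point_mem p) hwS
    rw [mul_comm, ← le_div_iff₀ (by positivity)] at hpw
    exact hφU ⟨Metric.mem_ball.2 (by linarith [dist_triangle (S.point p) w z]),
      hS.1.carrier_subset_compl (S.point_mem p)⟩
  have hU0 : ∀ v ∈ U, dist v (φ (S.point 0)) ≤ ε / 2 := fun v hv => by
    linarith [dist_triangle_right v (φ (S.point 0)) x, Metric.mem_ball.1 (hUball hv),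
      Metric.mem_ball.1 (hUball (hmem 0))]
  have hfill := hG' S hS U _ hUsc (fun p hp => by rw [hG S hS hp]; exact hmem p) hU0
    (S.localCoord w)
  rw [hF S hS hwS]
  linarith [dist_triangle (G S (S.localCoord w)) (φ (S.point 0)) x,
    Metric.mem_ball.1 (hUball (hmem 0))]

theorem exists_continuousOn_compl_tendsto [SimplyConnectedSpace X] (hlsc : LocSimplyConnected X)
    (hA : IsClosed A) (V : ℝ × ℝ → X) :
    ∃ F : ℝ × ℝ → X, ContinuousOn F Aᶜ ∧
      ∀ z ∈ A, ∀ x, Tendsto V (𝓝 z) (𝓝 x) → Tendsto F (𝓝[Aᶜ] z) (𝓝 x) := by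
  choose c hc using fun (j : ℕ) (y y' : X) =>
    exists_isNearOptimalPath y y' (η := 1 / 2 ^ j) (by positivity)
  have hfill (S : DyadicSquare) : ∃ G : C(I × I, X), S.IsWhitney A →
      Set.EqOn G (fun p => skeletonMap A c V (S.point p)) squareBoundary ∧
        IsNearOptimalFilling G (skeletonMap A c V (S.point 0)) (1 / 2 ^ S.level) := by
    by_cases hS : S.IsWhitney A
    · obtain ⟨G, hG⟩ := exists_isNearOptimalFilling (continuousOn_skeletonMap_point hS)
        (skeletonMap A c V (S.point 0)) (η := 1 / 2 ^ S.level) (by positivity)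
      exact ⟨G, fun _ => hG⟩
    · exact ⟨.const _ (V 0), fun h => absurd h hS⟩
  choose G hG using hfill
  obtain ⟨F, hFc, hF⟩ := exists_continuousOn_eqOn_whitney hA fun S hS => (hG S hS).1
  exact ⟨F, hFc, fun z hz x hx => tendsto_of_isNearOptimalFilling hlsc hA
    (fun S hS => (hG S hS).1) (fun S hS => (hG S hS).2) hF hz
    (tendsto_skeletonMap hlsc hA hc hz hx)⟩

theorem exists_planar_extension [SimplyConnectedSpace X] (hlsc : LocSimplyConnected X)
    (hA : IsClosed A) {f : ℝ × ℝ → X} (hf : ContinuousOn f A) :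
    ∃ F : ℝ × ℝ → X, Continuous F ∧ Set.EqOn F f A := by
  rcases A.eq_empty_or_nonempty with rfl | hne
  · exact ⟨fun _ => f 0, continuous_const, Set.eqOn_empty _ _⟩
  choose near hnearA hnear using fun z => hA.exists_infDist_eq_dist hne z
  have hV : ∀ z ∈ A, Tendsto (fun p => f (near p)) (𝓝 z) (𝓝 (f z)) := fun z hz => by
    refine (hf z hz).tendsto.comp (tendsto_nhdsWithin_iff.2 ⟨?_, .of_forall hnearA⟩)
    rw [tendsto_iff_dist_tendsto_zero]
    have hlim : Tendsto (fun p : ℝ × ℝ => 2 * dist p z) (𝓝 z) (𝓝 0) := by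
      have : Continuous fun p : ℝ × ℝ => 2 * dist p z := by fun_prop
      simpa using this.tendsto z
    refine squeeze_zero (fun _ => dist_nonneg) (fun p => ?_) hlim
    linarith [dist_triangle_left (near p) z p, hnear p, Metric.infDist_le_dist_of_mem hz (x := p)]
  obtain ⟨F, hFc, hF⟩ := exists_continuousOn_compl_tendsto hlsc hA fun p => f (near p)
  refine ⟨A.piecewise f F, continuous_iff_continuousAt.2 fun z => ?_, A.piecewise_eqOn f F⟩
  by_cases hz : z ∈ A
  · have hcompl : Tendsto (A.piecewise f F) (𝓝[Aᶜ] z) (𝓝 (f z)) :=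
      (hF z hz _ (hV z hz)).congr' ((A.piecewise_eqOn_compl f F).symm.eventuallyEq_nhdsWithin)
    have hmem : Tendsto (A.piecewise f F) (𝓝[A] z) (𝓝 (f z)) :=
      (hf z hz).tendsto.congr' ((A.piecewise_eqOn f F).symm.eventuallyEq_nhdsWithin)
    rw [ContinuousAt, Set.piecewise_eq_of_mem _ _ _ hz, ← nhdsWithin_univ, ← Set.union_compl_self A,
      nhdsWithin_union]
    exact hmem.sup hcompl
  · have hz' := hA.isOpen_compl.mem_nhds hz
    exact (hFc.continuousAt hz').congr ((A.piecewise_eqOn_compl f F).symm.eventuallyEq_of_mem hz')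

end PlanarExtension

/-! ### Noncrossing families and matchings -/

section Lamination

variable {ι : Type*} {u v u' v' : ι → ℝ}

/-- A family of pairs of real intervals `[u i, v i]` and `[u' i, v' i]`, any two of which are either
nested or side by side. -/
structure IsNoncrossing (u v u' v' : ι → ℝ) : Prop where
  left_le : ∀ i, u i ≤ v i
  right_le : ∀ i, u' i ≤ v' i
  pairwise : Pairwise fun i j => v' i ≤ u j ∨ v' j ≤ u i ∨ (v i ≤ u j ∧ v' j ≤ u' i) ∨
    (v j ≤ u i ∧ v' i ≤ u' j)

/-- The union of the vertical strips above the diagonal which lie over the intervals `[u i, v i]`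
and have height at most `v' i`. -/
def verticalStrips (u v v' : ι → ℝ) : Set (ℝ × ℝ) :=
  {p | ∃ i, p.1 ∈ Set.Icc (u i) (v i) ∧ p.2 ∈ Set.Icc p.1 (v' i)}

/-- The union of the horizontal strips above the diagonal which lie beside the intervals
`[u' i, v' i]` and extend to the left as far as `u i`. -/
def horizontalStrips (u u' v' : ι → ℝ) : Set (ℝ × ℝ) :=
  {p | ∃ i, p.2 ∈ Set.Icc (u' i) (v' i) ∧ p.1 ∈ Set.Icc (u i) p.2}

theorem IsNoncrossing.eq_of_mem_closure {Y : Type*} [TopologicalSpace Y] [T2Space Y]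
    (h : IsNoncrossing u v u' v') {f : ℝ → Y} (hf : Continuous f) {c : ι → Y}
    (hc : ∀ i, ∀ s ∈ Set.Icc (u i) (v i), f s = c i)
    (hc' : ∀ i, ∀ s ∈ Set.Icc (u' i) (v' i), f s = c i) {p : ℝ × ℝ}
    (hp : p ∈ closure (verticalStrips u v v')) (hp' : p ∈ closure (horizontalStrips u u' v')) :
    f p.1 = f p.2 := by
  have hsub : verticalStrips u v v' ⊆ {q | q.1 ≤ q.2} := by
    rintro q ⟨_, _, hq⟩
    exact hq.1
  have hle : p.1 ≤ p.2 :=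
    closure_minimal hsub (isClosed_le continuous_fst continuous_snd) hp
  rcases hle.eq_or_lt with heq | hlt
  · rw [heq]
  by_contra hne
  have hopen : IsOpen {q : ℝ × ℝ | q.1 < q.2 ∧ f q.1 ≠ f q.2} :=
    (isOpen_lt continuous_fst continuous_snd).inter (isOpen_ne_fun (by fun_prop) (by fun_prop))
  obtain ⟨δ, hδ, hball⟩ := Metric.isOpen_iff.1 hopen p ⟨hlt, hne⟩
  obtain ⟨⟨a₁, b₁⟩, hq₁, i, hi, hi'⟩ :=
    mem_closure_iff_nhds.1 hp _ (Metric.ball_mem_nhds p hδ)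
  obtain ⟨⟨a₂, b₂⟩, hq₂, j, hj, hj'⟩ :=
    mem_closure_iff_nhds.1 hp' _ (Metric.ball_mem_nhds p hδ)
  rw [← ball_prod_same, Real.ball_eq_Ioo, Real.ball_eq_Ioo] at hball hq₁ hq₂
  have hlt_ne {x y : ℝ} (hx : x ∈ Set.Ioo (p.1 - δ) (p.1 + δ))
      (hy : y ∈ Set.Ioo (p.2 - δ) (p.2 + δ)) : x < y ∧ f x ≠ f y :=
    hball (Set.mk_mem_prod hx hy)
  by_cases hij : i = j
  · subst hij
    exact (hlt_ne hq₁.1 hq₂.2).2 ((hc i _ hi).trans (hc' i _ hj).symm)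
  rcases h.pairwise hij with hij | hij | ⟨hij, -⟩ | ⟨-, hij⟩
  · exact (hlt_ne hq₂.1 hq₁.2).1.not_ge (hi'.2.trans (hij.trans hj'.1))
  · exact (hlt_ne hq₁.1 hq₂.2).1.not_ge (hj.2.trans (hij.trans hi.1))
  · have huj : u j ∈ Set.Ioo (p.1 - δ) (p.1 + δ) :=
      Set.ordConnected_Ioo.out hq₁.1 hq₂.1 ⟨hi.2.trans hij, hj'.1⟩
    exact (hlt_ne huj hq₂.2).2 ((hc j _ ⟨le_rfl, h.left_le j⟩).trans (hc' j _ hj).symm)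
  · have hvi : v' i ∈ Set.Ioo (p.2 - δ) (p.2 + δ) :=
      Set.ordConnected_Ioo.out hq₁.2 hq₂.2 ⟨hi'.2, hij.trans hj.1⟩
    exact (hlt_ne hq₁.1 hvi).2 ((hc i _ hi).trans (hc' i _ ⟨h.right_le i, le_rfl⟩).symm)

theorem IsNoncrossing.exists_extension [SimplyConnectedSpace X] (hlsc : LocSimplyConnected X)
    (h : IsNoncrossing u v u' v') {f : ℝ → X} (hf : Continuous f) {c : ι → X}
    (hc : ∀ i, ∀ s ∈ Set.Icc (u i) (v i), f s = c i)
    (hc' : ∀ i, ∀ s ∈ Set.Icc (u' i) (v' i), f s = c i) :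
    ∃ F : ℝ × ℝ → X, Continuous F ∧ (∀ s, F (s, s) = f s) ∧
      (∀ p ∈ verticalStrips u v v', F p = f p.1) ∧
      ∀ p ∈ horizontalStrips u u' v', F p = f p.2 := by
  have hdiag : IsClosed {p : ℝ × ℝ | p.1 = p.2} := isClosed_eq continuous_fst continuous_snd
  set A₁ := closure (verticalStrips u v v') ∪ {p | p.1 = p.2}
  set A₂ := closure (horizontalStrips u u' v') ∪ {p | p.1 = p.2}
  have hA₁ : IsClosed A₁ := isClosed_closure.union hdiag
  have hA₂ : IsClosed A₂ := isClosed_closure.union hdiag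
  let g : ℝ × ℝ → X := A₁.piecewise (fun p => f p.1) (fun p => f p.2)
  have hg₁ : Set.EqOn g (fun p => f p.1) A₁ := Set.piecewise_eqOn _ _ _
  have hg₂ : Set.EqOn g (fun p => f p.2) A₂ := by
    intro p hp₂
    by_cases hp₁ : p ∈ A₁
    · rw [hg₁ hp₁]
      rcases hp₁, hp₂ with ⟨hp₁ | hp, hp₂ | hp⟩
      exacts [h.eq_of_mem_closure hf hc hc' hp₁ hp₂, congrArg f hp, congrArg f hp, congrArg f hp]
    · exact Set.piecewise_eq_of_notMem _ _ _ hp₁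
  have hg : ContinuousOn g (A₁ ∪ A₂) := ContinuousOn.union_of_isClosed
    ((by fun_prop : Continuous fun p : ℝ × ℝ => f p.1).continuousOn.congr hg₁)
    ((by fun_prop : Continuous fun p : ℝ × ℝ => f p.2).continuousOn.congr hg₂) hA₁ hA₂
  obtain ⟨F, hF, hFg⟩ := exists_planar_extension hlsc (hA₁.union hA₂) hg
  refine ⟨F, hF, fun s => ?_, fun p hp => ?_, fun p hp => ?_⟩
  · exact (hFg (Or.inl (Or.inr rfl))).trans (hg₁ (Or.inr rfl))
  · exact (hFg (Or.inl (Or.inl (subset_closure hp)))).trans (hg₁ (Or.inl (subset_closure hp)))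
  · exact (hFg (Or.inr (Or.inl (subset_closure hp)))).trans (hg₂ (Or.inl (subset_closure hp)))

end Lamination

section Matching

variable {α β T : Type*} [LinearOrder T] {lab : α → β × Bool} {τ : α → T} {s : Set α} {μ : α → α}

/-- A noncrossing matching `μ` of a set `s` of letters, where `lab` gives the generator and the sign
of a letter and `τ` gives its time. -/
structure IsNoncrossingMatching (lab : α → β × Bool) (τ : α → T) (s : Set α) (μ : α → α) :
    Prop where
  mem : ∀ a ∈ s, μ a ∈ s
  involutive : ∀ a ∈ s, μ (μ a) = a
  label : ∀ a ∈ s, lab (μ a) = ((lab a).1, !(lab a).2)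
  noncrossing : ∀ a ∈ s, ∀ b ∈ s, τ a < τ b → τ b < τ (μ a) → τ a < τ (μ b) ∧ τ (μ b) < τ (μ a)

theorem IsNoncrossingMatching.exists_insert_insert (h : IsNoncrossingMatching lab τ s μ) {a a' : α}
    (haa' : τ a < τ a') (hadj : ∀ y ∈ s, τ y < τ a ∨ τ a' < τ y)
    (hlab : lab a' = ((lab a).1, !(lab a).2)) :
    ∃ ν, IsNoncrossingMatching lab τ (insert a (insert a' s)) ν := by
  have hne : a' ≠ a := by rintro rfl; exact lt_irrefl _ haa'
  have hs : ∀ y ∈ s, y ≠ a ∧ y ≠ a' := fun y hy =>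
    ⟨by rintro rfl; rcases hadj _ hy with hy | hy <;> order,
      by rintro rfl; rcases hadj _ hy with hy | hy <;> order⟩
  let ν : α → α := fun y => if y = a then a' else if y = a' then a else μ y
  have hνa : ν a = a' := if_pos rfl
  have hνa' : ν a' = a := (if_neg hne).trans (if_pos rfl)
  have hν : ∀ y ∈ s, ν y = μ y := fun y hy => (if_neg (hs y hy).1).trans (if_neg (hs y hy).2)
  refine ⟨ν, ?_, ?_, ?_, ?_⟩
  · rintro y (rfl | rfl | hy)
    · simp [hνa]
    · simp [hνa']
    · simp [hν y hy, h.mem y hy]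
  · rintro y (rfl | rfl | hy)
    · rw [hνa, hνa']
    · rw [hνa', hνa]
    · rw [hν y hy, hν _ (h.mem y hy), h.involutive y hy]
  · rintro y (rfl | rfl | hy)
    · rw [hνa, hlab]
    · rw [hνa', hlab, Bool.not_not]
    · rw [hν y hy, h.label y hy]
  · rintro y (rfl | rfl | hy) z (rfl | rfl | hz) hyz hzy
    · order
    · rw [hνa] at hzy
      order
    · rw [hνa] at hzy
      rcases hadj z hz with hz | hz <;> order
    · order
    · order
    · rw [hνa'] at hzy
      order
    · rw [hν y hy] at hzy ⊢
      rw [hνa]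
      rcases hadj _ (h.mem y hy) with hμy | hμy <;> constructor <;> order
    · rw [hν y hy] at hzy ⊢
      rw [hνa']
      rcases hadj y hy with hy | hy <;> constructor <;> order
    · rw [hν y hy] at hzy ⊢
      rw [hν z hz]
      exact h.noncrossing y hy z hz hyz hzy

/-- Each cancellation of a trivial word matches two adjacent letters. -/
theorem exists_isNoncrossingMatching_of_mk_eq_one {L : List α}
    (hL : L.Pairwise fun a b => τ a < τ b) (h : FreeGroup.mk (L.map lab) = 1) :
    ∃ μ, IsNoncrossingMatching lab τ {a | a ∈ L} μ := by
  have hred : FreeGroup.Red (L.map lab) [] := by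
    obtain ⟨w, hw, hnil⟩ := FreeGroup.Red.exact.1 (h.trans FreeGroup.one_eq_mk)
    rwa [FreeGroup.Red.nil_iff.1 hnil] at hw
  clear h
  generalize hW : L.map lab = W at hred
  induction hred using Relation.ReflTransGen.head_induction_on generalizing L with
  | refl =>
    rw [List.map_eq_nil_iff.1 hW]
    exact ⟨id, by simp, by simp, by simp, by simp⟩
  | head hstep _ ih =>
    obtain @⟨l₁, l₂, x, b⟩ := hstep
    obtain ⟨L₁, _, rfl, hL₁, hR⟩ := List.map_eq_append_iff.1 hW
    obtain ⟨a, _, rfl, ha, hR'⟩ := List.map_eq_cons_iff.1 hR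
    obtain ⟨a', L₂, rfl, ha', hL₂⟩ := List.map_eq_cons_iff.1 hR'
    simp only [List.pairwise_append, List.pairwise_cons, List.mem_cons, forall_eq_or_imp] at hL
    obtain ⟨hsort₁, ⟨⟨haa', -⟩, ha'₂, hsort₂⟩, h₁⟩ := hL
    have hsort : (L₁ ++ L₂).Pairwise fun a b => τ a < τ b :=
      List.pairwise_append.2 ⟨hsort₁, hsort₂, fun y hy => (h₁ y hy).2.2⟩
    obtain ⟨μ, hμ⟩ := ih hsort (by rw [List.map_append, hL₁, hL₂])
    have hadj : ∀ y ∈ L₁ ++ L₂, τ y < τ a ∨ τ a' < τ y := fun y hy =>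
      (List.mem_append.1 hy).imp (fun hy => (h₁ y hy).1) (ha'₂ y)
    have hinsert : {y | y ∈ L₁ ++ a :: a' :: L₂} = insert a (insert a' {y | y ∈ L₁ ++ L₂}) := by
      ext y
      simp only [List.mem_append, List.mem_cons, Set.mem_insert_iff, Set.mem_ofPred_eq]
      tauto
    rw [hinsert]
    exact hμ.exists_insert_insert haa' hadj (by rw [ha, ha'])

/-- Compactness: the matchings of the finite subfamilies converge along an ultrafilter. -/
theorem exists_isNoncrossingMatching_of_forall_finset (hfin : ∀ n, {a ∈ s | (lab a).1 = n}.Finite)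
    (h : ∀ t : Finset β, ∃ μ, IsNoncrossingMatching lab τ {a ∈ s | (lab a).1 ∈ t} μ) :
    ∃ μ, IsNoncrossingMatching lab τ s μ := by
  choose μ hμ using h
  let U : Ultrafilter (Finset β) := Ultrafilter.of atTop
  have hU : ∀ a ∈ s, ∀ᶠ t in (U : Filter (Finset β)), a ∈ {a ∈ s | (lab a).1 ∈ t} := fun a ha =>
    (Filter.Eventually.filter_mono (Ultrafilter.of_le _)
      (eventually_ge_atTop {(lab a).1})).mono fun t ht => ⟨ha, Finset.singleton_subset_iff.1 ht⟩
  have hlim : ∀ a, ∃ b, a ∈ s → ∀ᶠ t in (U : Filter (Finset β)), μ t a = b := by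
    intro a
    by_cases ha : a ∈ s
    · have hmem : ∀ᶠ t in (U : Filter (Finset β)), ∃ b ∈ {b ∈ s | (lab b).1 = (lab a).1},
          μ t a = b := by
        filter_upwards [hU a ha] with t hat
        exact ⟨μ t a, ⟨((hμ t).mem a hat).1, by rw [(hμ t).label a hat]⟩, rfl⟩
      obtain ⟨b, -, hb⟩ := (Ultrafilter.eventually_exists_mem_iff (hfin _)).1 hmem
      exact ⟨b, fun _ => hb⟩
    · exact ⟨a, fun ha' => absurd ha' ha⟩
  choose ν hν using hlim
  have hνs : ∀ a ∈ s, ν a ∈ s := fun a ha => by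
    obtain ⟨t, hνt, hat⟩ := ((hν a ha).and (hU a ha)).exists
    exact hνt ▸ ((hμ t).mem a hat).1
  refine ⟨ν, hνs, fun a ha => ?_, fun a ha => ?_, fun a ha b hb hab hba => ?_⟩
  · obtain ⟨t, hνt, hνt', hat⟩ := ((hν a ha).and ((hν _ (hνs a ha)).and (hU a ha))).exists
    rw [← hνt', ← hνt, (hμ t).involutive a hat]
  · obtain ⟨t, hνt, hat⟩ := ((hν a ha).and (hU a ha)).exists
    exact hνt ▸ (hμ t).label a hat
  · obtain ⟨t, hνa, hνb, hat, hbt⟩ :=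
      ((hν a ha).and ((hν b hb).and ((hU a ha).and (hU b hb)))).exists
    have := (hμ t).noncrossing a hat b hbt hab
    rw [hνa, hνb] at this
    exact this hba

end Matching

/-! ### Words of paths in the Hawaiian earring -/

section Crossing

/-- The indicator function of the closed upper half circle. -/
def upperIndicator (u : Circle) : ℤ := if 0 ≤ (u : ℂ).im then 1 else 0

/-- The signed number of crossings of `-1` by the short arc between two near points of the circle;
counterclockwise crossings are positive. -/
def crossing (u v : Circle) : ℤ :=
  if (u : ℂ).re < 0 ∧ (v : ℂ).re < 0 then upperIndicator u - upperIndicator v else 0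

theorem crossing_of_re_neg {u v : Circle} (hu : (u : ℂ).re < 0) (hv : (v : ℂ).re < 0) :
    crossing u v = upperIndicator u - upperIndicator v :=
  if_pos ⟨hu, hv⟩

theorem re_neg_of_crossing_ne_zero {u v : Circle} (h : crossing u v ≠ 0) :
    (u : ℂ).re < 0 ∧ (v : ℂ).re < 0 := by
  by_contra hre
  exact h (if_neg hre)

theorem crossing_eq_zero_of_upperIndicator_eq {u v : Circle}
    (h : upperIndicator u = upperIndicator v) : crossing u v = 0 := by
  rw [crossing, h, sub_self, ite_self]

theorem crossing_self (u : Circle) : crossing u u = 0 :=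
  crossing_eq_zero_of_upperIndicator_eq rfl

theorem crossing_swap (u v : Circle) : crossing v u = -crossing u v := by
  simp only [crossing, and_comm (a := (v : ℂ).re < 0)]
  split_ifs <;> ring

theorem crossing_one_left (v : Circle) : crossing 1 v = 0 := by
  by_contra h
  have := (re_neg_of_crossing_ne_zero h).1
  simp only [Circle.coe_one, Complex.one_re] at this
  linarith

theorem crossing_add_of_re_neg {u v w : Circle} (hu : (u : ℂ).re < 0) (hv : (v : ℂ).re < 0)
    (hw : (w : ℂ).re < 0) : crossing u v + crossing v w = crossing u w := by
  rw [crossing_of_re_neg hu hv, crossing_of_re_neg hv hw, crossing_of_re_neg hu hw]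
  ring

theorem abs_re_sub_re_le_dist (u v : Circle) : |(u : ℂ).re - (v : ℂ).re| ≤ dist u v := by
  rw [← Complex.sub_re]
  exact (Complex.abs_re_le_norm _).trans_eq (dist_eq_norm (u : ℂ) v).symm

theorem abs_im_sub_im_le_dist (u v : Circle) : |(u : ℂ).im - (v : ℂ).im| ≤ dist u v := by
  rw [← Complex.sub_im]
  exact (Complex.abs_im_le_norm _).trans_eq (dist_eq_norm (u : ℂ) v).symm

theorem re_lt_neg_half_of_abs_im_lt {u : Circle} (hre : (u : ℂ).re < 0)
    (him : |(u : ℂ).im| < 1 / 2) : (u : ℂ).re < -(1 / 2) := by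
  have hu := Circle.normSq_coe u
  rw [Complex.normSq_apply] at hu
  rw [abs_lt] at him
  by_contra! hlt
  nlinarith

theorem re_lt_neg_half_of_crossing_ne_zero {u v : Circle} (h : crossing u v ≠ 0)
    (huv : dist u v < 1 / 2) : (u : ℂ).re < -(1 / 2) ∧ (v : ℂ).re < -(1 / 2) := by
  have him := (abs_im_sub_im_le_dist u v).trans_lt huv
  obtain ⟨hu, hv⟩ := re_neg_of_crossing_ne_zero h
  have hne := mt crossing_eq_zero_of_upperIndicator_eq h
  unfold upperIndicator at hne
  rw [abs_lt] at him
  constructor <;> refine re_lt_neg_half_of_abs_im_lt ‹_› ?_ <;> rw [abs_lt] <;>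
    split_ifs at hne with h₁ h₂ h₂ <;> first | exact absurd rfl hne | constructor <;> linarith

/-- The letter of the word of a path in the Hawaiian earring which is contributed by a short step
from `p` to `q`, where only the circles in `s` are recorded. -/
def letterAt (s : Finset ℕ+) (p q : HEset) : FreeGroup ℕ+ :=
  if h : ∃ n ∈ s, crossing (hawaiianCoord n p) (hawaiianCoord n q) ≠ 0 then
    FreeGroup.of h.choose ^ crossing (hawaiianCoord h.choose p) (hawaiianCoord h.choose q)
  else 1

variable {s : Finset ℕ+} {p q r : HEset} {n : ℕ+}

theorem letterAt_eq_one (h : ∀ m ∈ s, crossing (hawaiianCoord m p) (hawaiianCoord m q) = 0) :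
    letterAt s p q = 1 :=
  dif_neg fun ⟨m, hm, hne⟩ => hne (h m hm)

theorem crossing_hawaiianCoord_eq_zero_of_ne (hp : (hawaiianCoord n p : ℂ).re < 0) {m : ℕ+}
    (hm : m ≠ n) : crossing (hawaiianCoord m p) (hawaiianCoord m q) = 0 := by
  have hne : hawaiianCoord n p ≠ 1 := by
    intro h
    rw [h, Circle.coe_one, Complex.one_re] at hp
    linarith
  rw [hawaiianCoord_eq_one_of_ne hne hm, crossing_one_left]

theorem letterAt_of_re_neg (hn : n ∈ s) (hp : (hawaiianCoord n p : ℂ).re < 0) :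
    letterAt s p q = FreeGroup.of n ^ crossing (hawaiianCoord n p) (hawaiianCoord n q) := by
  unfold letterAt
  split_ifs with hex
  · have : hex.choose = n := by
      by_contra hne
      exact hex.choose_spec.2 (crossing_hawaiianCoord_eq_zero_of_ne hp hne)
    rw [this]
  · push Not at hex
    rw [hex n hn, zpow_zero]

theorem letterAt_self (s : Finset ℕ+) (p : HEset) : letterAt s p p = 1 :=
  letterAt_eq_one fun _ _ => crossing_self _

/-- If `-1` is crossed between two of three near points, then all three lie in the left half of the
same circle, where `crossing` is a coboundary. -/
theorem letterAt_mul (hpq : ∀ n ∈ s, dist (hawaiianCoord n p) (hawaiianCoord n q) < 1 / 2)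
    (hqr : ∀ n ∈ s, dist (hawaiianCoord n q) (hawaiianCoord n r) < 1 / 2)
    (hpr : ∀ n ∈ s, dist (hawaiianCoord n p) (hawaiianCoord n r) < 1 / 2) :
    letterAt s p q * letterAt s q r = letterAt s p r := by
  by_cases h : ∃ n ∈ s, (hawaiianCoord n p : ℂ).re < 0 ∧ (hawaiianCoord n q : ℂ).re < 0 ∧
      (hawaiianCoord n r : ℂ).re < 0
  · obtain ⟨n, hn, hp, hq, hr⟩ := h
    rw [letterAt_of_re_neg hn hp, letterAt_of_re_neg hn hq, letterAt_of_re_neg hn hp, ← zpow_add,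
      crossing_add_of_re_neg hp hq hr]
  · push Not at h
    have re_neg_of_dist_lt {u v : Circle} (huv : dist u v < 1 / 2) (hu : (u : ℂ).re < -(1 / 2)) :
        (v : ℂ).re < 0 := by
      linarith [abs_lt.1 ((abs_re_sub_re_le_dist u v).trans_lt huv)]
    rw [letterAt_eq_one, letterAt_eq_one, letterAt_eq_one, one_mul]
    · intro m hm
      by_contra hc
      have hre := re_lt_neg_half_of_crossing_ne_zero hc (hpr m hm)
      linarith [h m hm (by linarith [hre.1]) (re_neg_of_dist_lt (hpq m hm) hre.1)]
    · intro m hm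
      by_contra hc
      have hre := re_lt_neg_half_of_crossing_ne_zero hc (hqr m hm)
      linarith [h m hm (re_neg_of_dist_lt ((dist_comm _ _).trans_lt (hpq m hm)) hre.1)
        (by linarith [hre.1])]
    · intro m hm
      by_contra hc
      have hre := re_lt_neg_half_of_crossing_ne_zero hc (hpq m hm)
      linarith [h m hm (by linarith [hre.1]) (by linarith [hre.2]),
        re_neg_of_dist_lt (hqr m hm) hre.2]

end Crossing

section LocalCocycle

variable {G : Type*} [Group G]

theorem prod_row_mul_eq {Y : Type*} {c : Y → Y → G} {r r' : ℕ → Y} {M : ℕ}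
    (h₁ : ∀ j < M, c (r j) (r (j + 1)) * c (r (j + 1)) (r' (j + 1)) = c (r j) (r' (j + 1)))
    (h₂ : ∀ j < M, c (r j) (r' j) * c (r' j) (r' (j + 1)) = c (r j) (r' (j + 1))) :
    ((List.range M).map fun j => c (r j) (r (j + 1))).prod * c (r M) (r' M) =
      c (r 0) (r' 0) * ((List.range M).map fun j => c (r' j) (r' (j + 1))).prod := by
  induction M with
  | zero => simp
  | succ M ih =>
    rw [List.prod_range_succ, List.prod_range_succ, mul_assoc, h₁ M (by omega), ← h₂ M (by omega),
      ← mul_assoc, ih (fun j hj => h₁ j (by omega)) (fun j hj => h₂ j (by omega)), mul_assoc]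

/-- The `j`-th point of the subdivision of the unit interval into `M` equal parts. -/
def gridPoint (M j : ℕ) : unitInterval := Set.projIcc 0 1 zero_le_one ((j : ℝ) / M)

theorem gridPoint_zero (M : ℕ) : gridPoint M 0 = 0 := by
  simp [gridPoint]

theorem gridPoint_self {M : ℕ} (hM : 0 < M) : gridPoint M M = 1 := by
  simp [gridPoint, div_self (Nat.cast_ne_zero.2 hM.ne' : (M : ℝ) ≠ 0)]

theorem coe_gridPoint {M j : ℕ} (h : j ≤ M) : (gridPoint M j : ℝ) = (j : ℝ) / M := by
  rw [gridPoint, Set.projIcc_of_mem _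
    ⟨by positivity, div_le_one_of_le₀ (Nat.cast_le.2 h) (Nat.cast_nonneg M)⟩]

theorem dist_gridPoint_succ_le (M j : ℕ) :
    dist (gridPoint M j) (gridPoint M (j + 1)) ≤ 1 / M := by
  have hlip := (LipschitzWith.projIcc (zero_le_one (α := ℝ))).dist_le_mul ((j : ℝ) / M)
    (((j + 1 : ℕ) : ℝ) / M)
  rw [NNReal.coe_one, one_mul] at hlip
  refine hlip.trans_eq ?_
  rw [Real.dist_eq, ← sub_div, abs_div, Nat.abs_cast]
  simp

theorem prod_gridPoint_eq_one {c : unitInterval × unitInterval → unitInterval × unitInterval → G}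
    {δ : ℝ} (hc : ∀ x y z, dist x y < δ → dist y z < δ → dist x z < δ → c x y * c y z = c x z)
    (h₁ : ∀ s s', c (1, s) (1, s') = 1) (hl : ∀ t t', c (t, 0) (t', 0) = 1)
    (hr : ∀ t t', c (t, 1) (t', 1) = 1) {M : ℕ} (hM : 0 < M) (hMδ : 1 / (M : ℝ) < δ) :
    ((List.range M).map fun j => c (0, gridPoint M j) (0, gridPoint M (j + 1))).prod = 1 := by
  let P (i j : ℕ) : unitInterval × unitInterval := (gridPoint M i, gridPoint M j)
  have hdist {i i' j j' : ℕ} (hi : i' = i ∨ i' = i + 1) (hj : j' = j ∨ j' = j + 1) :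
      dist (P i j) (P i' j') < δ := by
    refine lt_of_le_of_lt ?_ hMδ
    rw [Prod.dist_eq]
    refine max_le ?_ ?_
    · rcases hi with rfl | rfl
      exacts [(dist_self _).trans_le (by positivity), dist_gridPoint_succ_le M i]
    · rcases hj with rfl | rfl
      exacts [(dist_self _).trans_le (by positivity), dist_gridPoint_succ_le M j]
  have hrow (i : ℕ) : ((List.range M).map fun j => c (P i j) (P i (j + 1))).prod =
      ((List.range M).map fun j => c (P (i + 1) j) (P (i + 1) (j + 1))).prod := by
    have h := prod_row_mul_eq (c := c) (r := P i) (r' := P (i + 1)) (M := M)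
      (fun j _ => hc _ _ _ (hdist (.inl rfl) (.inr rfl)) (hdist (.inr rfl) (.inl rfl))
        (hdist (.inr rfl) (.inr rfl)))
      (fun j _ => hc _ _ _ (hdist (.inr rfl) (.inl rfl)) (hdist (.inl rfl) (.inr rfl))
        (hdist (.inr rfl) (.inr rfl)))
    simpa only [P, gridPoint_zero, gridPoint_self hM, hl, hr, one_mul, mul_one] using h
  have hrows (i : ℕ) : ((List.range M).map fun j => c (P 0 j) (P 0 (j + 1))).prod =
      ((List.range M).map fun j => c (P i j) (P i (j + 1))).prod := by
    induction i with
    | zero => rfl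
    | succ i ih => rw [ih, hrow]
  simpa [P, gridPoint_zero, gridPoint_self hM, h₁] using hrows M

theorem exists_forall_prod_letterAt_eq_one {H : unitInterval × unitInterval → HEset}
    (hH : Continuous H) (h₁ : ∀ s, H (1, s) = h0) (hl : ∀ t, H (t, 0) = h0)
    (hr : ∀ t, H (t, 1) = h0) (s : Finset ℕ+) :
    ∃ K : ℕ, ∀ M ≥ K, 0 < M → ((List.range M).map fun j =>
      letterAt s (H (0, gridPoint M j)) (H (0, gridPoint M (j + 1)))).prod = 1 := by
  have huc : UniformContinuous fun x (n : s) => hawaiianCoord n (H x) :=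
    CompactSpace.uniformContinuous_of_continuous
      (continuous_pi fun n => (continuous_hawaiianCoord n).comp hH)
  obtain ⟨δ, hδ, hdist⟩ := Metric.uniformContinuous_iff.1 huc (1 / 2) one_half_pos
  have hclose {x y : unitInterval × unitInterval} (hxy : dist x y < δ) (n : ℕ+) (hn : n ∈ s) :
      dist (hawaiianCoord n (H x)) (hawaiianCoord n (H y)) < 1 / 2 :=
    (dist_pi_lt_iff one_half_pos).1 (hdist hxy) ⟨n, hn⟩
  obtain ⟨K, hK⟩ := exists_nat_gt (1 / δ)
  refine ⟨K, fun M hKM hM => prod_gridPoint_eq_one (c := fun x y => letterAt s (H x) (H y))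
    (fun x y z hxy hyz hxz => letterAt_mul (hclose hxy) (hclose hyz) (hclose hxz))
    (fun t t' => ?_) (fun t t' => ?_) (fun t t' => ?_) hM
    ((one_div_lt (by positivity) hδ).2 (hK.trans_le (Nat.cast_le.2 hKM)))⟩
  · rw [h₁, h₁, letterAt_self]
  · rw [hl, hl, letterAt_self]
  · rw [hr, hr, letterAt_self]

end LocalCocycle

section Turn

/-- The point of the circle with argument `2πt`. -/
def turn (t : ℝ) : Circle := Circle.exp (2 * Real.pi * t)

theorem continuous_turn : Continuous turn := by
  unfold turn
  fun_prop

theorem turn_eq_one_iff {t : ℝ} : turn t = 1 ↔ ∃ k : ℤ, t = k := by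
  rw [turn, Circle.exp_eq_one]
  refine exists_congr fun k => ?_
  rw [mul_comm, mul_left_inj' Real.two_pi_pos.ne']

theorem turn_int_add (k : ℤ) (t : ℝ) : turn (k + t) = turn t := by
  have h : turn (k + t) = turn k * turn t := by
    simp only [turn, mul_add, Circle.exp_add]
  rw [h, turn_eq_one_iff.2 ⟨k, rfl⟩, one_mul]

theorem re_turn (t : ℝ) : (turn t : ℂ).re = Real.cos (2 * Real.pi * t) := by
  rw [turn, Circle.coe_exp, Complex.exp_ofReal_mul_I_re]

theorem im_turn (t : ℝ) : (turn t : ℂ).im = Real.sin (2 * Real.pi * t) := by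
  rw [turn, Circle.coe_exp, Complex.exp_ofReal_mul_I_im]

theorem re_turn_neg {t : ℝ} (h0 : 1 / 4 < t) (h1 : t < 3 / 4) : (turn t : ℂ).re < 0 := by
  rw [re_turn]
  have hpi := Real.pi_pos
  exact Real.cos_neg_of_pi_div_two_lt_of_lt (by nlinarith) (by nlinarith)

theorem upperIndicator_turn_of_le {t : ℝ} (h0 : 0 ≤ t) (h1 : t ≤ 1 / 2) :
    upperIndicator (turn t) = 1 := by
  refine if_pos ?_
  rw [im_turn]
  have hpi := Real.pi_pos
  exact Real.sin_nonneg_of_nonneg_of_le_pi (by positivity) (by nlinarith)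

theorem upperIndicator_turn_of_lt {t : ℝ} (h0 : 1 / 2 < t) (h1 : t < 1) :
    upperIndicator (turn t) = 0 := by
  refine if_neg (not_le.2 ?_)
  rw [im_turn, ← Real.sin_sub_two_pi]
  have hpi := Real.pi_pos
  exact Real.sin_neg_of_neg_of_neg_pi_lt (by nlinarith) (by nlinarith)

theorem crossing_turn_div {R r : ℕ} (hodd : Odd R) (hR : 1 < R) (hr : r < R) :
    crossing (turn (r / R)) (turn ((r + 1) / R)) = if r = R / 2 then 1 else 0 := by
  obtain ⟨q, rfl⟩ := hodd
  rw [show (2 * q + 1) / 2 = q by omega]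
  have hR0 : (0 : ℝ) < (2 * q + 1 : ℕ) := by positivity
  have hq : (1 : ℝ) ≤ q := by exact_mod_cast (by omega : 1 ≤ q)
  rcases lt_trichotomy r q with h | rfl | h
  · have h' : (r : ℝ) + 1 ≤ q := by exact_mod_cast h
    rw [if_neg h.ne]
    refine crossing_eq_zero_of_upperIndicator_eq ?_
    rw [upperIndicator_turn_of_le (by positivity), upperIndicator_turn_of_le (by positivity)] <;>
      rw [div_le_iff₀ hR0] <;> push_cast <;> linarith
  · have hlo : 1 / 4 < (r : ℝ) / (2 * r + 1 : ℕ) := by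
      rw [lt_div_iff₀ hR0]; push_cast; linarith
    have hlo' : (r : ℝ) / (2 * r + 1 : ℕ) < 1 / 2 := by
      rw [div_lt_iff₀ hR0]; push_cast; linarith
    have hhi : 1 / 2 < ((r : ℝ) + 1) / (2 * r + 1 : ℕ) := by
      rw [lt_div_iff₀ hR0]; push_cast; linarith
    have hhi' : ((r : ℝ) + 1) / (2 * r + 1 : ℕ) < 3 / 4 := by
      rw [div_lt_iff₀ hR0]; push_cast; linarith
    rw [if_pos rfl, crossing_of_re_neg (re_turn_neg hlo (by linarith))
      (re_turn_neg (by linarith) hhi'), upperIndicator_turn_of_le (by positivity) hlo'.le,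
      upperIndicator_turn_of_lt hhi (by linarith), sub_zero]
  · have h' : (q : ℝ) + 1 ≤ r := by exact_mod_cast h
    have hhalf : 1 / 2 < (r : ℝ) / (2 * q + 1 : ℕ) := by
      rw [lt_div_iff₀ hR0]; push_cast; linarith
    have hlt : (r : ℝ) / (2 * q + 1 : ℕ) < ((r : ℝ) + 1) / (2 * q + 1 : ℕ) := by
      gcongr; linarith
    have hle : ((r : ℝ) + 1) / (2 * q + 1 : ℕ) ≤ 1 := by
      rw [div_le_one hR0]; exact_mod_cast hr
    rw [if_neg h.ne']
    rcases hle.eq_or_lt with heq | hlt'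
    · rw [heq, turn_eq_one_iff.2 ⟨1, Int.cast_one.symm⟩, crossing_swap, crossing_one_left,
        neg_zero]
    · refine crossing_eq_zero_of_upperIndicator_eq ?_
      rw [upperIndicator_turn_of_lt hhalf (by linarith), upperIndicator_turn_of_lt _ hlt']
      linarith

theorem crossing_turn_step {R r : ℕ} (hodd : Odd R) (hR : 1 < R) (hr : r < R) {ε : ℤ}
    (hε : |ε| ≤ 1) (k : ℤ) :
    crossing (turn (k + ε * (r / R))) (turn (k + ε * ((r + 1) / R))) =
      if r = R / 2 then ε else 0 := by
  rw [turn_int_add, turn_int_add]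
  rw [abs_le] at hε
  obtain rfl | rfl | rfl : ε = -1 ∨ ε = 0 ∨ ε = 1 := by omega
  · have hcast : ((R - 1 - r : ℕ) : ℝ) = R - 1 - r := by
      rw [Nat.cast_sub (by omega), Nat.cast_sub hR.le, Nat.cast_one]
    have hR0 : (R : ℝ) ≠ 0 := by positivity
    have hodd' := Nat.two_mul_div_two_add_one_of_odd hodd
    have h := crossing_turn_div hodd hR (r := R - 1 - r) (by omega)
    rw [hcast, crossing_swap, ← turn_int_add (-1), ← turn_int_add (-1) ((R - 1 - r : ℝ) / R)] at h
    have hleft : ((-1 : ℤ) : ℝ) * (r / R) = (-1 : ℤ) + (R - 1 - r + 1) / R := by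
      push_cast
      field_simp
      ring
    have hright : ((-1 : ℤ) : ℝ) * ((r + 1) / R) = (-1 : ℤ) + (R - 1 - r) / R := by
      push_cast
      field_simp
      ring
    rw [hleft, hright, neg_eq_iff_eq_neg.1 h]
    have hiff : R - 1 - r = R / 2 ↔ r = R / 2 := by omega
    simp only [hiff, neg_ite, neg_zero]
  · simp [crossing_self]
  · simpa using crossing_turn_div hodd hR hr

end Turn

section Stair

/-- The retraction of the line onto the unit interval. -/
def clamp (t : ℝ) : ℝ := max 0 (min 1 t)

theorem continuous_clamp : Continuous clamp := by
  unfold clamp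
  fun_prop

theorem clamp_of_nonpos {t : ℝ} (h : t ≤ 0) : clamp t = 0 :=
  max_eq_left ((min_le_right _ _).trans h)

theorem clamp_of_one_le {t : ℝ} (h : 1 ≤ t) : clamp t = 1 := by
  rw [clamp, min_eq_left h, max_eq_right zero_le_one]

theorem clamp_of_mem {t : ℝ} (h0 : 0 ≤ t) (h1 : t ≤ 1) : clamp t = t := by
  rw [clamp, min_eq_right h1, max_eq_right h0]

theorem clamp_nonneg (t : ℝ) : 0 ≤ clamp t := le_max_left _ _

theorem clamp_le_one (t : ℝ) : clamp t ≤ 1 := max_le zero_le_one (min_le_left _ _)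

/-- The `i`-th interval of the subdivision of the unit interval into `m` equal parts. -/
def cell (m i : ℕ) : Set ℝ := Set.Icc (i / m) ((i + 1) / m)

theorem mem_cell_iff {m i : ℕ} (hm : 0 < m) {s : ℝ} :
    s ∈ cell m i ↔ (i : ℝ) ≤ m * s ∧ m * s ≤ i + 1 := by
  have hm' : (0 : ℝ) < m := Nat.cast_pos.2 hm
  rw [cell, Set.mem_Icc, div_le_iff₀' hm', le_div_iff₀' hm']

theorem cell_subset_Icc {m i : ℕ} (hi : i < m) : cell m i ⊆ Set.Icc 0 1 := by
  have hm : (0 : ℝ) < m := Nat.cast_pos.2 (by omega)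
  refine Set.Icc_subset_Icc (by positivity) ?_
  rw [div_le_one hm]
  exact_mod_cast hi

theorem exists_mem_cell {m : ℕ} (hm : 0 < m) {s : ℝ} (hs : s ∈ Set.Icc (0 : ℝ) 1) :
    ∃ i < m, s ∈ cell m i := by
  have hm' : (0 : ℝ) < m := Nat.cast_pos.2 hm
  simp only [mem_cell_iff hm]
  rcases hs.2.eq_or_lt with rfl | h1
  · refine ⟨m - 1, by omega, ?_⟩
    rw [Nat.cast_sub hm]
    push_cast
    constructor <;> linarith
  · have h0 : 0 ≤ m * s := mul_nonneg hm'.le hs.1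
    refine ⟨⌊m * s⌋₊, ?_, Nat.floor_le h0, (Nat.lt_floor_add_one _).le⟩
    rw [Nat.floor_lt h0]
    exact mul_lt_of_lt_one_right hm' h1

/-- The piecewise linear function running from `w i` to `w (i + 1)` on the `i`-th of `m` cells. -/
def stair (m : ℕ) (w : ℕ → ℤ) (s : ℝ) : ℝ :=
  w 0 + ∑ i ∈ Finset.range m, ((w (i + 1) - w i : ℤ) : ℝ) * clamp (m * s - i)

theorem continuous_stair (m : ℕ) (w : ℕ → ℤ) : Continuous (stair m w) := by
  have := continuous_clamp
  unfold stair
  fun_prop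

theorem stair_of_mem_cell {m i : ℕ} (w : ℕ → ℤ) {s : ℝ} (hi : i < m) (hs : s ∈ cell m i) :
    stair m w s = w i + ((w (i + 1) - w i : ℤ) : ℝ) * (m * s - i) := by
  obtain ⟨h0, h1⟩ := (mem_cell_iff (by omega)).1 hs
  have hpast : ∑ j ∈ Finset.range i, ((w (j + 1) - w j : ℤ) : ℝ) * clamp (m * s - j) =
      w i - w 0 := by
    rw [← Int.cast_sub, ← Finset.sum_range_sub, Int.cast_sum]
    refine Finset.sum_congr rfl fun j hj => ?_
    have hj' : (j : ℝ) + 1 ≤ i := by exact_mod_cast Finset.mem_range.1 hj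
    rw [clamp_of_one_le (by linarith), mul_one]
  have hfuture : ∑ j ∈ Finset.range m, ((w (j + 1) - w j : ℤ) : ℝ) * clamp (m * s - j) =
      ∑ j ∈ Finset.range (i + 1), ((w (j + 1) - w j : ℤ) : ℝ) * clamp (m * s - j) := by
    refine (Finset.sum_subset (Finset.range_subset_range.2 hi) fun j _ hj => ?_).symm
    have hj' : (i : ℝ) + 1 ≤ j := by exact_mod_cast not_lt.1 (mt Finset.mem_range.2 hj)
    rw [clamp_of_nonpos (by linarith), mul_zero]
  rw [stair, hfuture, Finset.sum_range_succ, hpast, clamp_of_mem (by linarith) (by linarith)]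
  ring

theorem crossing_stair {m R i r : ℕ} {w : ℕ → ℤ} (hw : |w (i + 1) - w i| ≤ 1) (hodd : Odd R)
    (hR : 1 < R) (hi : i < m) (hr : r < R) :
    crossing (turn (stair m w ((R * i + r : ℕ) / (m * R : ℕ))))
      (turn (stair m w ((R * i + r + 1 : ℕ) / (m * R : ℕ)))) =
      if r = R / 2 then w (i + 1) - w i else 0 := by
  have hm0 : (0 : ℝ) < m := Nat.cast_pos.2 (by omega)
  have hR0 : (0 : ℝ) < R := Nat.cast_pos.2 (by omega)
  have hstair (k : ℕ) (hk : k ≤ R) : stair m w ((R * i + k : ℕ) / (m * R : ℕ)) =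
      w i + ((w (i + 1) - w i : ℤ) : ℝ) * (k / R) := by
    have hmul : (m : ℝ) * ((R * i + k : ℕ) / (m * R : ℕ)) = i + k / R := by
      push_cast
      field_simp
    have hle : (k : ℝ) / R ≤ 1 := div_le_one_of_le₀ (Nat.cast_le.2 hk) hR0.le
    rw [stair_of_mem_cell w hi, hmul, add_sub_cancel_left]
    rw [mem_cell_iff (by omega), hmul]
    exact ⟨le_add_of_nonneg_right (by positivity), by linarith⟩
  rw [hstair r hr.le, add_assoc, hstair (r + 1) hr, Nat.cast_succ]
  exact crossing_turn_step hodd hR hr hw (w i)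

theorem round_eq_of_abs_sub_lt {r : ℝ} {k : ℤ} (h : |r - k| < 1 / 2) : round r = k := by
  have hround := abs_sub_round r
  rw [abs_lt] at h
  rw [abs_le] at hround
  have h₁ : round r < k + 1 := by rify; linarith
  have h₂ : k - 1 < round r := by rify; linarith
  omega

theorem abs_round_sub_round_le_one {r t : ℝ} (h : |r - t| < 1) : |round r - round t| ≤ 1 := by
  have hr := abs_sub_round r
  have ht := abs_sub_round t
  rw [abs_lt] at h
  rw [abs_le] at hr ht ⊢
  have h₁ : round r - round t < 2 := by rify; linarith
  have h₂ : -2 < round r - round t := by rify; linarith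
  omega

theorem exists_forall_mem_cell_abs_sub_lt {l : ℝ → ℝ} (hl : ContinuousOn l (Set.Icc 0 1)) {ε : ℝ}
    (hε : 0 < ε) {b : ℕ} (hb : 1 < b) : ∃ e : ℕ, ∀ i < b ^ e, ∀ s ∈ cell (b ^ e) i,
      ∀ t ∈ cell (b ^ e) i, |l s - l t| < ε := by
  obtain ⟨δ, hδ, huc⟩ :=
    Metric.uniformContinuousOn_iff.1 (isCompact_Icc.uniformContinuousOn_of_continuous hl) ε hε
  obtain ⟨e, he⟩ := exists_pow_lt_of_lt_one hδ (inv_lt_one_of_one_lt₀ (Nat.one_lt_cast.2 hb))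
  refine ⟨e, fun i hi s hs t ht =>
    huc s (cell_subset_Icc hi hs) t (cell_subset_Icc hi ht) (lt_of_le_of_lt ?_ he)⟩
  refine (Real.dist_le_of_mem_Icc hs ht).trans_eq ?_
  rw [← sub_div, add_sub_cancel_left, inv_pow, one_div, Nat.cast_pow]

/-- The staircase is obtained by rounding `l` on a fine grid. -/
theorem exists_stair_approximation {l : ℝ → ℝ} (hl : ContinuousOn l (Set.Icc 0 1)) {b : ℕ}
    (hb : 1 < b) :
    ∃ (e : ℕ) (w : ℕ → ℤ), (∀ i < b ^ e, |w (i + 1) - w i| ≤ 1) ∧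
      (∀ i < b ^ e, w (i + 1) ≠ w i → ∀ s ∈ cell (b ^ e) i, ∀ k : ℤ, l s ≠ k) ∧
      ∀ s ∈ Set.Icc (0 : ℝ) 1, ∀ k : ℤ, l s = k → stair (b ^ e) w s = k := by
  obtain ⟨e, hosc⟩ := exists_forall_mem_cell_abs_sub_lt hl (ε := 1 / 2) one_half_pos hb
  set m := b ^ e
  have hm : 0 < m := pow_pos (by omega) e
  let w : ℕ → ℤ := fun i => round (l (i / m))
  have hleft (i : ℕ) : (i : ℝ) / m ∈ cell m i := ⟨le_rfl, by gcongr; linarith⟩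
  have hright (i : ℕ) : ((i + 1 : ℕ) : ℝ) / m ∈ cell m i :=
    ⟨by gcongr; linarith, by rw [Nat.cast_succ]⟩
  have hint {i : ℕ} (hi : i < m) {s : ℝ} (hs : s ∈ cell m i) {k : ℤ} (hk : l s = k) :
      w i = k ∧ w (i + 1) = k :=
    ⟨round_eq_of_abs_sub_lt (hk ▸ hosc i hi _ (hleft i) s hs),
      round_eq_of_abs_sub_lt (hk ▸ hosc i hi _ (hright i) s hs)⟩
  refine ⟨e, w, fun i hi => ?_, fun i hi hne s hs k hk => ?_, fun s hs k hk => ?_⟩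
  · exact abs_round_sub_round_le_one ((hosc i hi _ (hright i) _ (hleft i)).trans (by norm_num))
  · obtain ⟨hi₁, hi₂⟩ := hint hi hs hk
    exact hne (hi₂.trans hi₁.symm)
  · obtain ⟨i, hi, hsi⟩ := exists_mem_cell hm hs
    obtain ⟨hi₁, hi₂⟩ := hint hi hsi hk
    rw [stair_of_mem_cell w hi hsi, hi₁, hi₂, sub_self, Int.cast_zero, zero_mul, add_zero]

end Stair

/-! ### Systems of staircases -/

/-- Staircases, one for each circle, with unit steps which are taken only while the base path `f`
rests at the base point of the circle. The numbers of cells are powers of `3`, so that the midpoints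
of the cells are also midpoints of cells of a common refinement. -/
structure StairSystem {ι Y : Type*} (d : ι → Y) (f : ℝ → Y) where
  /-- The `n`-th staircase has `3 ^ exponent n` cells. -/
  exponent : ι → ℕ
  /-- The height of the `n`-th staircase at the start of its `i`-th cell is `height n i`. -/
  height : ι → ℕ → ℤ
  step : ∀ n, ∀ i < 3 ^ exponent n, |height n (i + 1) - height n i| ≤ 1
  base : ∀ n, ∀ i < 3 ^ exponent n, height n (i + 1) ≠ height n i →
    ∀ s ∈ cell (3 ^ exponent n) i, f s = d n

namespace StairSystem

section Letters

variable {ι Y : Type*} {d : ι → Y} {f : ℝ → Y} (S : StairSystem d f) {a b : ι × ℕ}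

/-- The `n`-th staircase of the system, as a function of time. -/
def staircase (n : ι) : ℝ → ℝ := stair (3 ^ S.exponent n) (S.height n)

/-- The letters of the word spelled by the system: the pair `(n, i)` is a letter when the `n`-th
staircase is not constant on its `i`-th cell. -/
def letters : Set (ι × ℕ) :=
  {a | a.2 < 3 ^ S.exponent a.1 ∧ S.height a.1 (a.2 + 1) ≠ S.height a.1 a.2}

/-- The initial time of a letter. -/
def start (a : ι × ℕ) : ℝ := a.2 / (3 ^ S.exponent a.1 : ℕ)

/-- The final time of a letter. -/
def finish (a : ι × ℕ) : ℝ := (a.2 + 1) / (3 ^ S.exponent a.1 : ℕ)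

/-- The middle time of a letter. -/
def time (a : ι × ℕ) : ℝ := (a.2 + 1 / 2) / (3 ^ S.exponent a.1 : ℕ)

/-- The increment of the staircase along a letter. -/
def jump (a : ι × ℕ) : ℤ := S.height a.1 (a.2 + 1) - S.height a.1 a.2

/-- The circle and the direction of a letter. -/
def label (a : ι × ℕ) : ι × Bool := (a.1, decide (S.jump a = 1))

theorem start_lt_time (a : ι × ℕ) : S.start a < S.time a := by
  unfold start time
  gcongr
  linarith

theorem time_lt_finish (a : ι × ℕ) : S.time a < S.finish a := by
  unfold finish time
  gcongr
  norm_num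

theorem start_lt_finish (a : ι × ℕ) : S.start a < S.finish a :=
  (S.start_lt_time a).trans (S.time_lt_finish a)

theorem start_nonneg (a : ι × ℕ) : 0 ≤ S.start a := by
  unfold start
  positivity

variable {S}

theorem finish_le_one (ha : a ∈ S.letters) : S.finish a ≤ 1 := by
  rw [finish, div_le_one (by positivity)]
  exact_mod_cast ha.1

theorem jump_eq_neg_one_or_one (ha : a ∈ S.letters) : S.jump a = -1 ∨ S.jump a = 1 := by
  have hstep := abs_le.1 (S.step _ _ ha.1)
  have hne := ha.2
  unfold jump
  omega

theorem eq_of_mem_Icc_start_finish (ha : a ∈ S.letters) {s : ℝ}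
    (hs : s ∈ Set.Icc (S.start a) (S.finish a)) : f s = d a.1 :=
  S.base _ _ ha.1 ha.2 s hs

theorem finish_le_start_or (hd : Function.Injective d) (ha : a ∈ S.letters) (hb : b ∈ S.letters)
    (hab : a ≠ b) : S.finish a ≤ S.start b ∨ S.finish b ≤ S.start a := by
  obtain ⟨n, i⟩ := a
  obtain ⟨k, j⟩ := b
  by_cases hnk : n = k
  · subst hnk
    have hij : i ≠ j := by
      rintro rfl
      exact hab rfl
    rcases lt_or_gt_of_ne hij with hij | hij
    · refine .inl ?_
      unfold start finish
      gcongr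
      exact_mod_cast hij
    · refine .inr ?_
      unfold start finish
      gcongr
      exact_mod_cast hij
  · by_contra! hlt
    let s := max (S.start (n, i)) (S.start (k, j))
    have hn : f s = d n := eq_of_mem_Icc_start_finish ha
      ⟨le_max_left _ _, max_le (S.start_lt_finish _).le hlt.1.le⟩
    have hk : f s = d k := eq_of_mem_Icc_start_finish hb
      ⟨le_max_right _ _, max_le hlt.2.le (S.start_lt_finish _).le⟩
    exact hnk (hd (hn.symm.trans hk))

theorem finish_le_start (hd : Function.Injective d) (ha : a ∈ S.letters) (hb : b ∈ S.letters)
    (hab : S.time a < S.time b) : S.finish a ≤ S.start b := by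
  have hne : a ≠ b := by
    rintro rfl
    exact hab.false
  refine (finish_le_start_or hd ha hb hne).resolve_right fun hba => ?_
  linarith [S.start_lt_time a, S.time_lt_finish b]

theorem injOn_time (hd : Function.Injective d) : S.letters.InjOn S.time := by
  intro a ha b hb hab
  by_contra hne
  have ha' := S.start_lt_time a
  have hb' := S.start_lt_time b
  rcases finish_le_start_or hd ha hb hne with h | h
  · linarith [S.time_lt_finish a]
  · linarith [S.time_lt_finish b]

theorem of_zpow_jump (ha : a ∈ S.letters) :
    FreeGroup.of a.1 ^ S.jump a = FreeGroup.mk [S.label a] := by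
  rcases jump_eq_neg_one_or_one ha with h | h <;> simp [label, h, FreeGroup.of, FreeGroup.invRev]

end Letters

end StairSystem

theorem exists_list_mk_map_eq_prod {α γ : Type*} {s : Set α} {pos : α → ℕ} (hpos : s.InjOn pos)
    {lab : α → γ × Bool} {φ : ℕ → FreeGroup γ} (hφ : ∀ a ∈ s, φ (pos a) = FreeGroup.mk [lab a])
    (M : ℕ) (hφ_one : ∀ j < M, j ∉ pos '' s → φ j = 1) :
    ∃ L : List α, (∀ a, a ∈ L ↔ a ∈ s ∧ pos a < M) ∧ (L.Pairwise fun a b => pos a < pos b) ∧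
      FreeGroup.mk (L.map lab) = ((List.range M).map φ).prod := by
  induction M with
  | zero => exact ⟨[], by simp, by simp, rfl⟩
  | succ M ih =>
    obtain ⟨L, hmem, hlt, hprod⟩ := ih fun j hj => hφ_one j (hj.trans M.lt_succ_self)
    rw [List.range_succ, List.map_append, List.prod_append, ← hprod, List.map_singleton,
      List.prod_singleton]
    by_cases hM : M ∈ pos '' s
    · obtain ⟨a, ha, rfl⟩ := hM
      refine ⟨L ++ [a], fun b => ?_, ?_, ?_⟩
      · rw [List.mem_append, hmem, List.mem_singleton, Nat.lt_succ_iff_lt_or_eq, and_or_left]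
        refine or_congr_right ⟨?_, fun hb => hpos hb.1 ha hb.2⟩
        rintro rfl
        exact ⟨ha, rfl⟩
      · refine List.pairwise_append.2 ⟨hlt, List.pairwise_singleton _ _, fun b hb c hc => ?_⟩
        rw [List.mem_singleton.1 hc]
        exact ((hmem b).1 hb).2
      · rw [List.map_append, List.map_singleton, ← FreeGroup.mul_mk, hφ a ha]
    · refine ⟨L, fun b => ?_, hlt, ?_⟩
      · rw [hmem, Nat.lt_succ_iff_lt_or_eq, and_or_left, or_iff_left]
        exact fun hb => hM ⟨b, hb⟩
      · rw [hφ_one M M.lt_succ_self hM, mul_one]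

theorem odd_three_pow (k : ℕ) : Odd (3 ^ k) := Odd.pow (by decide)

namespace StairSystem

section Word

variable {ι Y : Type*} {d : ι → Y} {f : ℝ → Y} (S : StairSystem d f) {n : ι} {a b : ι × ℕ}
  {A : ℕ}

/-- The index of the cell of the subdivision into `3 ^ A` cells which contains the middle time of a
letter. -/
def position (A : ℕ) (a : ι × ℕ) : ℕ :=
  3 ^ (A - S.exponent a.1) * a.2 + 3 ^ (A - S.exponent a.1) / 2

variable {S}

theorem position_add_half (h : S.exponent a.1 ≤ A) :
    (S.position A a : ℝ) + 1 / 2 = 3 ^ A * S.time a := by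
  have hodd : ((2 * (3 ^ (A - S.exponent a.1) / 2) + 1 : ℕ) : ℝ) = 3 ^ (A - S.exponent a.1) := by
    exact_mod_cast Nat.two_mul_div_two_add_one_of_odd (odd_three_pow _)
  have hpow : (3 : ℝ) ^ A = 3 ^ (A - S.exponent a.1) * 3 ^ S.exponent a.1 := by
    rw [← pow_add, Nat.sub_add_cancel h]
  rw [hpow, time, position]
  push_cast at hodd ⊢
  field_simp
  linear_combination hodd

theorem position_lt_position_iff (ha : S.exponent a.1 ≤ A) (hb : S.exponent b.1 ≤ A) :
    S.position A a < S.position A b ↔ S.time a < S.time b := by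
  rw [← mul_lt_mul_iff_right₀ (by positivity : (0 : ℝ) < 3 ^ A), ← position_add_half ha,
    ← position_add_half hb, add_lt_add_iff_right, Nat.cast_lt]

theorem position_lt (ha : a ∈ S.letters) (h : S.exponent a.1 ≤ A) : S.position A a < 3 ^ A := by
  have htime : 3 ^ A * S.time a < 3 ^ A :=
    mul_lt_of_lt_one_right (by positivity) ((S.time_lt_finish a).trans_le (finish_le_one ha))
  rw [← position_add_half h] at htime
  exact_mod_cast (by linarith : (S.position A a : ℝ) < 3 ^ A)

theorem crossing_staircase (h : S.exponent n < A) {i r : ℕ} (hi : i < 3 ^ S.exponent n)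
    (hr : r < 3 ^ (A - S.exponent n)) :
    crossing (turn (S.staircase n ((3 ^ (A - S.exponent n) * i + r : ℕ) / (3 ^ A : ℕ))))
      (turn (S.staircase n ((3 ^ (A - S.exponent n) * i + r + 1 : ℕ) / (3 ^ A : ℕ)))) =
      if r = 3 ^ (A - S.exponent n) / 2 then S.jump (n, i) else 0 := by
  have hpow : 3 ^ A = 3 ^ S.exponent n * 3 ^ (A - S.exponent n) := by
    rw [← pow_add, Nat.add_sub_cancel' h.le]
  rw [hpow]
  exact crossing_stair (S.step n i hi) (odd_three_pow _)
    (Nat.one_lt_pow (by omega) (by norm_num)) hi hr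

theorem crossing_staircase_position (ha : a ∈ S.letters) (h : S.exponent a.1 < A) :
    crossing (turn (S.staircase a.1 (S.position A a / (3 ^ A : ℕ))))
      (turn (S.staircase a.1 ((S.position A a + 1 : ℕ) / (3 ^ A : ℕ)))) = S.jump a :=
  (crossing_staircase h ha.1 (Nat.div_lt_self (by positivity) one_lt_two)).trans (if_pos rfl)

theorem exists_position_eq_of_crossing_ne_zero (h : S.exponent n < A) {j : ℕ} (hj : j < 3 ^ A)
    (hne : crossing (turn (S.staircase n (j / (3 ^ A : ℕ))))
      (turn (S.staircase n ((j + 1 : ℕ) / (3 ^ A : ℕ)))) ≠ 0) :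
    ∃ a ∈ S.letters, a.1 = n ∧ S.position A a = j := by
  set R := 3 ^ (A - S.exponent n) with hR
  have hi : j / R < 3 ^ S.exponent n := by
    rw [Nat.div_lt_iff_lt_mul (by positivity), hR, ← pow_add, Nat.add_sub_cancel' h.le]
    exact hj
  have hcrossing := crossing_staircase h hi (Nat.mod_lt j (by positivity))
  rw [← hR, Nat.div_add_mod] at hcrossing
  rw [hcrossing] at hne
  obtain ⟨hmod, hjump⟩ := ite_ne_right_iff.1 hne
  refine ⟨(n, j / R), ⟨hi, sub_ne_zero.1 hjump⟩, rfl, ?_⟩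
  rw [position, ← hR, ← hmod, Nat.div_add_mod]

end Word

section Matching

variable {Y : Type*} {d : ℕ+ → Y} {f : ℝ → Y} {S : StairSystem d f}
  {H : unitInterval × unitInterval → HEset}

theorem letterAt_position
    (hS : ∀ n (t : unitInterval), hawaiianCoord n (H (0, t)) = turn (S.staircase n t))
    {s : Finset ℕ+} {A : ℕ} {a : ℕ+ × ℕ} (ha : a ∈ S.letters) (has : a.1 ∈ s)
    (h : S.exponent a.1 < A) :
    letterAt s (H (0, gridPoint (3 ^ A) (S.position A a)))
      (H (0, gridPoint (3 ^ A) (S.position A a + 1))) = FreeGroup.mk [S.label a] := by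
  have hlt := position_lt ha h.le
  have hcrossing := crossing_staircase_position ha h
  rw [← coe_gridPoint hlt.le, ← coe_gridPoint hlt, ← hS, ← hS] at hcrossing
  have hne : S.jump a ≠ 0 := sub_ne_zero.2 ha.2
  rw [letterAt_of_re_neg has (re_neg_of_crossing_ne_zero (hcrossing ▸ hne)).1, hcrossing,
    of_zpow_jump ha]

theorem letterAt_eq_one_of_notMem_image_position
    (hS : ∀ n (t : unitInterval), hawaiianCoord n (H (0, t)) = turn (S.staircase n t))
    {s : Finset ℕ+} {A j : ℕ} (h : ∀ n ∈ s, S.exponent n < A) (hj : j < 3 ^ A)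
    (hjs : j ∉ S.position A '' {a ∈ S.letters | a.1 ∈ s}) :
    letterAt s (H (0, gridPoint (3 ^ A) j)) (H (0, gridPoint (3 ^ A) (j + 1))) = 1 := by
  refine letterAt_eq_one fun n hn => ?_
  by_contra hne
  rw [hS, hS, coe_gridPoint hj.le, coe_gridPoint hj] at hne
  obtain ⟨a, ha, rfl, hpos⟩ := exists_position_eq_of_crossing_ne_zero (h n hn) hj hne
  exact hjs ⟨a, ⟨ha, hn⟩, hpos⟩

theorem exists_list_mk_map_label_eq_one (hd : Function.Injective d) (hH : Continuous H)
    (hS : ∀ n (t : unitInterval), hawaiianCoord n (H (0, t)) = turn (S.staircase n t))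
    (h₁ : ∀ t, H (1, t) = h0) (hl : ∀ t, H (t, 0) = h0) (hr : ∀ t, H (t, 1) = h0)
    (s : Finset ℕ+) : ∃ L : List (ℕ+ × ℕ), (∀ a, a ∈ L ↔ a ∈ S.letters ∧ a.1 ∈ s) ∧
      (L.Pairwise fun a b => S.time a < S.time b) ∧ FreeGroup.mk (L.map S.label) = 1 := by
  obtain ⟨K, hK⟩ := exists_forall_prod_letterAt_eq_one hH h₁ hl hr s
  let A := K + ∑ n ∈ s, (S.exponent n + 1)
  have hA {n : ℕ+} (hn : n ∈ s) : S.exponent n < A :=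
    (Finset.single_le_sum (f := fun n => S.exponent n + 1) (fun _ _ => Nat.zero_le _) hn).trans
      (Nat.le_add_left _ _)
  have hKA : K ≤ 3 ^ A := (Nat.le_add_right _ _).trans (Nat.lt_pow_self (by norm_num)).le
  have hinj : {a ∈ S.letters | a.1 ∈ s}.InjOn (S.position A) := by
    intro a ha b hb hab
    refine injOn_time hd ha.1 hb.1 (le_antisymm ?_ ?_) <;> rw [← not_lt]
    · exact fun h => hab.not_gt ((position_lt_position_iff (hA hb.2).le (hA ha.2).le).2 h)
    · exact fun h => hab.not_lt ((position_lt_position_iff (hA ha.2).le (hA hb.2).le).2 h)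
  obtain ⟨L, hL, hlt, hprod⟩ := exists_list_mk_map_eq_prod hinj (lab := S.label)
    (φ := fun j => letterAt s (H (0, gridPoint (3 ^ A) j)) (H (0, gridPoint (3 ^ A) (j + 1))))
    (fun a ha => letterAt_position hS ha.1 ha.2 (hA ha.2)) (3 ^ A)
    (fun j => letterAt_eq_one_of_notMem_image_position hS fun n => hA)
  refine ⟨L, fun a => (hL a).trans ?_, hlt.imp_of_mem fun {a b} ha hb h => ?_,
    hprod.trans (hK _ hKA (by positivity))⟩
  · exact and_iff_left_of_imp fun ha => position_lt ha.1 (hA ha.2).le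
  · exact (position_lt_position_iff (hA ((hL a).1 ha).1.2).le (hA ((hL b).1 hb).1.2).le).1 h

theorem exists_isNoncrossingMatching (hd : Function.Injective d) (hH : Continuous H)
    (hS : ∀ n (t : unitInterval), hawaiianCoord n (H (0, t)) = turn (S.staircase n t))
    (h₁ : ∀ t, H (1, t) = h0) (hl : ∀ t, H (t, 0) = h0) (hr : ∀ t, H (t, 1) = h0) :
    ∃ μ, IsNoncrossingMatching S.label S.time S.letters μ := by
  refine exists_isNoncrossingMatching_of_forall_finset (fun n => ?_) fun s => ?_
  · refine ((Set.finite_Iio (3 ^ S.exponent n)).image (Prod.mk n)).subset ?_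
    rintro ⟨_, i⟩ ⟨hi, rfl⟩
    exact ⟨i, hi.1, rfl⟩
  · obtain ⟨L, hL, hlt, hmk⟩ := exists_list_mk_map_label_eq_one hd hH hS h₁ hl hr s
    obtain ⟨μ, hμ⟩ := exists_isNoncrossingMatching_of_mk_eq_one hlt hmk
    exact ⟨μ, (Set.ext hL : {a | a ∈ L} = _) ▸ hμ⟩

end Matching

end StairSystem

theorem sum_eq_sum_filter_lt_add {α T M : Type*} [LinearOrder T] [AddCommMonoid M] {s : Finset α}
    {μ : α → α} {τ : α → T} (hmem : ∀ a ∈ s, μ a ∈ s) (hinv : ∀ a ∈ s, μ (μ a) = a)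
    (hne : ∀ a ∈ s, τ (μ a) ≠ τ a) (g : α → M) :
    ∑ a ∈ s, g a = ∑ a ∈ s with τ a < τ (μ a), (g a + g (μ a)) := by
  rw [Finset.sum_add_distrib, ← Finset.sum_filter_add_sum_filter_not s fun a => τ a < τ (μ a)]
  refine congrArg _ (Finset.sum_nbij' μ μ ?_ ?_ ?_ ?_ ?_) <;> intro a ha <;>
    obtain ⟨ha, hlt⟩ := Finset.mem_filter.1 ha
  · rw [Finset.mem_filter, hinv a ha]
    exact ⟨hmem a ha, lt_of_le_of_ne (not_lt.1 hlt) (hne a ha)⟩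
  · rw [Finset.mem_filter, hinv a ha]
    exact ⟨hmem a ha, hlt.not_gt⟩
  · exact hinv a ha
  · exact hinv a ha
  · rw [hinv a ha]

namespace StairSystem

section Fold

variable {ι Y : Type*} {d : ι → Y} {f : ℝ → Y} (S : StairSystem d f) {μ : ι × ℕ → ι × ℕ}
  {a b : ι × ℕ} {s : ℝ}

/-- The letters on the `n`-th circle. -/
def lettersOn (n : ι) : Finset (ι × ℕ) :=
  {a ∈ ({n} : Finset ι) ×ˢ Finset.range (3 ^ S.exponent n) | a ∈ S.letters}

/-- The letters which come before their partners in the matching `μ`. -/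
def openings (μ : ι × ℕ → ι × ℕ) : Set (ι × ℕ) := {a ∈ S.letters | S.time a < S.time (μ a)}

/-- The progress of a letter as a function of time. -/
def ramp (a : ι × ℕ) (s : ℝ) : ℝ := clamp ((3 ^ S.exponent a.1 : ℕ) * s - a.2)

/-- The extension of the `n`-th staircase from the diagonal over the triangle `p.1 ≤ p.2`. The
contribution of a letter is cut off as its partner progresses, so that matched letters cancel. -/
def fold (μ : ι × ℕ → ι × ℕ) (n : ι) (p : ℝ × ℝ) : ℝ :=
  ∑ a ∈ S.lettersOn n with S.time a < S.time (μ a),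
    (S.jump a : ℝ) * min (S.ramp a p.1) (1 - S.ramp (μ a) p.2)

theorem continuous_ramp (a : ι × ℕ) : Continuous (S.ramp a) := by
  have := continuous_clamp
  unfold ramp
  fun_prop

theorem continuous_fold (μ : ι × ℕ → ι × ℕ) (n : ι) : Continuous (S.fold μ n) := by
  have := S.continuous_ramp
  unfold fold
  fun_prop

variable {S} {n : ι}

theorem mem_lettersOn : a ∈ S.lettersOn n ↔ a ∈ S.letters ∧ a.1 = n := by
  simp only [lettersOn, Finset.mem_filter, Finset.mem_product, Finset.mem_singleton,
    Finset.mem_range]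
  constructor
  · rintro ⟨⟨rfl, -⟩, ha⟩
    exact ⟨ha, rfl⟩
  · rintro ⟨ha, rfl⟩
    exact ⟨⟨rfl, ha.1⟩, ha⟩

theorem ramp_nonneg : 0 ≤ S.ramp a s := clamp_nonneg _

theorem ramp_le_one : S.ramp a s ≤ 1 := clamp_le_one _

theorem ramp_of_le_start (h : s ≤ S.start a) : S.ramp a s = 0 := by
  refine clamp_of_nonpos ?_
  rw [start, le_div_iff₀ (by positivity)] at h
  linarith

theorem ramp_of_finish_le (h : S.finish a ≤ s) : S.ramp a s = 1 := by
  refine clamp_of_one_le ?_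
  rw [finish, div_le_iff₀ (by positivity)] at h
  linarith

theorem min_ramp_of_le_start (h : s ≤ S.start a) (t : ℝ) :
    min (S.ramp a s) (1 - S.ramp b t) = 0 := by
  rw [ramp_of_le_start h, min_eq_left (sub_nonneg.2 ramp_le_one)]

theorem min_ramp_of_finish_le (s : ℝ) {t : ℝ} (h : S.finish b ≤ t) :
    min (S.ramp a s) (1 - S.ramp b t) = 0 := by
  rw [ramp_of_finish_le h, sub_self, min_eq_right ramp_nonneg]

theorem fold_zero_left (μ : ι × ℕ → ι × ℕ) (n : ι) (t : ℝ) : S.fold μ n (0, t) = 0 :=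
  Finset.sum_eq_zero fun a _ => by rw [min_ramp_of_le_start (S.start_nonneg a), mul_zero]

theorem fold_one_right (hμ : IsNoncrossingMatching S.label S.time S.letters μ) (n : ι) (s : ℝ) :
    S.fold μ n (s, 1) = 0 := by
  refine Finset.sum_eq_zero fun a ha => ?_
  have ha := (mem_lettersOn.1 (Finset.mem_filter.1 ha).1).1
  rw [min_ramp_of_finish_le s (finish_le_one (hμ.mem a ha)), mul_zero]

theorem exists_opening_of_fold_ne_int {p : ℝ × ℝ} (h : ∀ k : ℤ, S.fold μ n p ≠ k) :
    ∃ a ∈ S.openings μ, a.1 = n ∧ S.start a ≤ p.1 ∧ p.2 ≤ S.finish (μ a) ∧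
      (p.1 ≤ S.finish a ∨ S.start (μ a) ≤ p.2) := by
  by_contra! hcon
  have hmem : S.fold μ n p ∈ (Int.castAddHom ℝ).range := by
    refine sum_mem fun a ha => ?_
    obtain ⟨ha, hlt⟩ := Finset.mem_filter.1 ha
    obtain ⟨ha, han⟩ := mem_lettersOn.1 ha
    rcases le_total p.1 (S.start a) with hstart | hstart
    · exact ⟨0, by rw [min_ramp_of_le_start hstart, mul_zero, map_zero]⟩
    rcases le_total (S.finish (μ a)) p.2 with hfinish | hfinish
    · exact ⟨0, by rw [min_ramp_of_finish_le _ hfinish, mul_zero, map_zero]⟩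
    obtain ⟨h₁, h₂⟩ := hcon a ⟨ha, hlt⟩ han hstart hfinish
    refine ⟨S.jump a, ?_⟩
    rw [ramp_of_finish_le h₁.le, ramp_of_le_start h₂.le, sub_zero, min_self, mul_one,
      Int.coe_castAddHom]
  obtain ⟨k, hk⟩ := hmem
  exact h k hk.symm

theorem fst_matching (hμ : IsNoncrossingMatching S.label S.time S.letters μ) (ha : a ∈ S.letters) :
    (μ a).1 = a.1 :=
  congrArg (fun l : ι × Bool => l.1) (hμ.label a ha)

theorem jump_matching (hμ : IsNoncrossingMatching S.label S.time S.letters μ)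
    (ha : a ∈ S.letters) : S.jump (μ a) = -S.jump a := by
  have hlabel := congrArg Prod.snd (hμ.label a ha)
  simp only [label] at hlabel
  rcases jump_eq_neg_one_or_one ha with h | h <;>
    rcases jump_eq_neg_one_or_one (hμ.mem a ha) with h' | h' <;> simp_all

theorem time_matching_ne (hd : Function.Injective d)
    (hμ : IsNoncrossingMatching S.label S.time S.letters μ) (ha : a ∈ S.letters) :
    S.time (μ a) ≠ S.time a := by
  intro h
  have hjump := jump_matching hμ ha
  rw [injOn_time hd (hμ.mem a ha) ha h] at hjump
  have := jump_eq_neg_one_or_one ha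
  omega

theorem staircase_eq_sum_lettersOn (S : StairSystem d f) (n : ι) (s : ℝ) :
    S.staircase n s = S.height n 0 + ∑ a ∈ S.lettersOn n, (S.jump a : ℝ) * S.ramp a s := by
  rw [lettersOn, Finset.sum_filter_of_ne, Finset.sum_product, Finset.sum_singleton]
  · rfl
  · rintro ⟨m, i⟩ hmi hne
    obtain ⟨hm, hi⟩ := Finset.mem_product.1 hmi
    obtain rfl : m = n := Finset.mem_singleton.1 hm
    refine ⟨Finset.mem_range.1 hi, fun heq => hne ?_⟩
    rw [jump, heq, sub_self, Int.cast_zero, zero_mul]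

theorem staircase_eq_fold (hd : Function.Injective d)
    (hμ : IsNoncrossingMatching S.label S.time S.letters μ) (n : ι) (s : ℝ) :
    S.staircase n s = S.height n 0 + S.fold μ n (s, s) := by
  have hletters {a : ι × ℕ} (ha : a ∈ S.lettersOn n) : a ∈ S.letters := (mem_lettersOn.1 ha).1
  have hmem : ∀ a ∈ S.lettersOn n, μ a ∈ S.lettersOn n := fun a ha =>
    mem_lettersOn.2 ⟨hμ.mem a (hletters ha),
      (fst_matching hμ (hletters ha)).trans (mem_lettersOn.1 ha).2⟩
  rw [staircase_eq_sum_lettersOn, sum_eq_sum_filter_lt_add hmem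
    (fun a ha => hμ.involutive a (hletters ha)) fun a ha => time_matching_ne hd hμ (hletters ha)]
  refine congrArg _ (Finset.sum_congr rfl fun a ha => ?_)
  obtain ⟨ha, hlt⟩ := Finset.mem_filter.1 ha
  have hfinish := finish_le_start hd (hletters ha) (hμ.mem a (hletters ha)) hlt
  rw [jump_matching hμ (hletters ha), Int.cast_neg, neg_mul, ← sub_eq_add_neg, ← mul_sub]
  rcases le_total s (S.start (μ a)) with hs | hs
  · rw [ramp_of_le_start hs, sub_zero, sub_zero, min_eq_left ramp_le_one]
  · rw [ramp_of_finish_le (hfinish.trans hs), min_eq_right (sub_le_self _ ramp_nonneg)]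

theorem disjoint_or_nested_of_time_lt (hd : Function.Injective d)
    (hμ : IsNoncrossingMatching S.label S.time S.letters μ) (ha : a ∈ S.openings μ)
    (hb : b ∈ S.openings μ) (hab : S.time a < S.time b) :
    S.finish (μ a) ≤ S.start b ∨ S.finish a ≤ S.start b ∧ S.finish (μ b) ≤ S.start (μ a) := by
  have ha' := hμ.mem a ha.1
  have hb' := hμ.mem b hb.1
  rcases lt_trichotomy (S.time b) (S.time (μ a)) with hlt | heq | hlt
  · exact .inr ⟨finish_le_start hd ha.1 hb.1 hab,
      finish_le_start hd hb' ha' (hμ.noncrossing a ha.1 b hb.1 hab hlt).2⟩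
  · obtain rfl := injOn_time hd hb.1 ha' heq
    have hlt := hb.2
    rw [hμ.involutive a ha.1] at hlt
    exact absurd hlt hab.not_gt
  · exact .inl (finish_le_start hd ha' hb.1 hlt)

/-- The interval `none` stands for the two legs of the triangle `0 ≤ p.1 ≤ p.2 ≤ 1`. -/
theorem isNoncrossing (hd : Function.Injective d)
    (hμ : IsNoncrossingMatching S.label S.time S.letters μ) :
    IsNoncrossing (ι := Option (S.openings μ)) (fun i => i.elim 0 fun a => S.start a)
      (fun i => i.elim 0 fun a => S.finish a) (fun i => i.elim 1 fun a => S.start (μ a))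
      (fun i => i.elim 1 fun a => S.finish (μ a)) where
  left_le := by
    rintro (_ | a)
    exacts [le_rfl, (S.start_lt_finish _).le]
  right_le := by
    rintro (_ | a)
    exacts [le_rfl, (S.start_lt_finish _).le]
  pairwise := by
    rintro (_ | a) (_ | b) hab
    · exact absurd rfl hab
    · exact .inr (.inr (.inl ⟨S.start_nonneg _, finish_le_one (hμ.mem _ b.2.1)⟩))
    · exact .inr (.inr (.inr ⟨S.start_nonneg _, finish_le_one (hμ.mem _ a.2.1)⟩))
    · have hne : S.time a ≠ S.time b := fun h =>
        hab (congrArg some (Subtype.ext (injOn_time hd a.2.1 b.2.1 h)))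
      rcases lt_or_gt_of_ne hne with hlt | hlt
      · exact (disjoint_or_nested_of_time_lt hd hμ a.2 b.2 hlt).imp_right fun h => .inr (.inl h)
      · exact .inr ((disjoint_or_nested_of_time_lt hd hμ b.2 a.2 hlt).imp_right .inr)

end Fold

theorem exists_fold_extension [SimplyConnectedSpace X] (hlsc : LocSimplyConnected X) {ι : Type*}
    {d : ι → X} (hd : Function.Injective d) {f : ℝ → X} (hf : Continuous f) (h01 : f 0 = f 1)
    {S : StairSystem d f} {μ : ι × ℕ → ι × ℕ}
    (hμ : IsNoncrossingMatching S.label S.time S.letters μ) :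
    ∃ F : ℝ × ℝ → X, Continuous F ∧ (∀ s, F (s, s) = f s) ∧
      (∀ t ∈ Set.Icc (0 : ℝ) 1, F (0, t) = f 0) ∧ (∀ s ∈ Set.Icc (0 : ℝ) 1, F (s, 1) = f 1) ∧
      ∀ n p, p.1 ≤ p.2 → (∀ k : ℤ, S.fold μ n p ≠ k) → F p = d n := by
  let c (i : Option (S.openings μ)) : X := i.elim (f 0) fun a => d a.1.1
  obtain ⟨F, hF, hdiag, hvert, hhor⟩ := (isNoncrossing hd hμ).exists_extension hlsc hf (c := c)
    (by
      rintro (_ | a) s hs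
      · exact congrArg f (le_antisymm hs.2 hs.1)
      · exact eq_of_mem_Icc_start_finish a.2.1 hs)
    (by
      rintro (_ | a) s hs
      · exact (congrArg f (le_antisymm hs.2 hs.1)).trans h01.symm
      · exact (eq_of_mem_Icc_start_finish (hμ.mem _ a.2.1) hs).trans
          (congrArg d (fst_matching hμ a.2.1)))
  refine ⟨F, hF, hdiag, fun t ht => hvert _ ⟨none, ⟨le_rfl, le_rfl⟩, ht⟩,
    fun s hs => hhor _ ⟨none, ⟨le_rfl, le_rfl⟩, hs⟩, fun n p hp hn => ?_⟩
  obtain ⟨a, ha, rfl, hstart, hfinish, hstrip | hstrip⟩ := exists_opening_of_fold_ne_int hn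
  · exact (hvert p ⟨some ⟨a, ha⟩, ⟨hstart, hstrip⟩, hp, hfinish⟩).trans
      (eq_of_mem_Icc_start_finish ha.1 ⟨hstart, hstrip⟩)
  · exact (hhor p ⟨some ⟨a, ha⟩, ⟨hstrip, hfinish⟩, hstart, hp⟩).trans
      ((eq_of_mem_Icc_start_finish (hμ.mem a ha.1) ⟨hstrip, hfinish⟩).trans
        (congrArg d (fst_matching hμ ha.1)))

end StairSystem

/-! ### Injectivity -/

theorem homotopic_of_square {Y : Type*} [TopologicalSpace Y] {y₀ y₁ : Y} {p q : Path y₀ y₁}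
    {G : unitInterval × unitInterval → Y} (hG : Continuous G) (h₀ : ∀ s, G (0, s) = p s)
    (h₁ : ∀ s, G (1, s) = q s) (hl : ∀ t, G (t, 0) = y₀) (hr : ∀ t, G (t, 1) = y₁) :
    p.Homotopic q :=
  ⟨{ toFun := G
     continuous_toFun := hG
     map_zero_left := h₀
     map_one_left := h₁
     prop' := by
      rintro t s (rfl | rfl)
      · exact (hl t).trans p.source.symm
      · exact (hr t).trans p.target.symm }⟩

theorem fundamentalGroup_map_injective {Y Z : Type*} [TopologicalSpace Y] [TopologicalSpace Z]
    (g : C(Y, Z)) (y : Y)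
    (h : ∀ γ : Path y y, (γ.map g.continuous).Homotopic (Path.refl (g y)) →
      γ.Homotopic (Path.refl y)) : Function.Injective (FundamentalGroup.map g y) := by
  rw [injective_iff_map_eq_one]
  intro a ha
  obtain ⟨γ, rfl⟩ := Path.Homotopic.Quotient.mk_surjective a
  exact Path.Homotopic.Quotient.eq.2 (h γ (Path.Homotopic.Quotient.eq.1 ha))

theorem exists_turn_lift {c : unitInterval → Circle} (hc : Continuous c) :
    ∃ l : ℝ → ℝ, Continuous l ∧ ∀ s : unitInterval, turn (l s) = c s := by
  obtain ⟨Γ, hΓ, -⟩ := Circle.isCoveringMap_exp.exists_path_lifts ⟨c, hc⟩ (Complex.arg (c 0))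
    (Circle.exp_arg (c 0)).symm
  refine ⟨fun s => Γ (Set.projIcc 0 1 zero_le_one s) / (2 * Real.pi),
    (Γ.continuous.comp continuous_projIcc).div_const _, fun s => ?_⟩
  dsimp only
  rw [turn, Set.projIcc_val, mul_div_cancel₀ _ Real.two_pi_pos.ne']
  exact congrFun hΓ s

section EarringHomotopy

variable {d : ℕ+ → X} {y z : X} {γ γ' : Path (emb d y) (emb d z)}

theorem homotopic_of_coord (hd : Function.Injective d) {F : unitInterval × unitInterval → X}
    {u : ℕ+ → unitInterval × unitInterval → Circle} (hF : Continuous F)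
    (hu : ∀ n, Continuous (u n)) (huF : ∀ n p, u n p ≠ 1 → F p = d n)
    (h₀ : ∀ s, F (0, s) = (γ s).base ∧ ∀ n, u n (0, s) = (γ s).coord n)
    (h₁ : ∀ s, F (1, s) = (γ' s).base ∧ ∀ n, u n (1, s) = (γ' s).coord n)
    (hl : ∀ t, F (t, 0) = y ∧ ∀ n, u n (t, 0) = 1)
    (hr : ∀ t, F (t, 1) = z ∧ ∀ n, u n (t, 1) = 1) : γ.Homotopic γ' := by
  have hofCoord {p : unitInterval × unitInterval} {q : ESp X d} (hb : F p = q.base)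
      (hc : ∀ n, u n p = q.coord n) : ESp.ofCoord d (F p) (fun n => u n p) = q :=
    ESp.ext_coord hb fun n => (ESp.coord_ofCoord hd (huF · p) n).trans (hc n)
  exact homotopic_of_square
    (ESp.continuous_ofCoord hd hF hu fun p n => huF n p)
    (fun s => hofCoord (h₀ s).1 (h₀ s).2) (fun s => hofCoord (h₁ s).1 (h₁ s).2)
    (fun t => hofCoord (hl t).1 fun n => ((hl t).2 n).trans (ESp.coord_emb n y).symm)
    fun t => hofCoord (hr t).1 fun n => ((hr t).2 n).trans (ESp.coord_emb n z).symm

theorem exists_path_of_coord (hd : Function.Injective d) (γ : Path (emb d y) (emb d z))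
    {u : ℕ+ → unitInterval → Circle} (hu : ∀ n, Continuous (u n))
    (huγ : ∀ n s, (γ s).coord n = 1 → u n s = 1) :
    ∃ γ' : Path (emb d y) (emb d z),
      (∀ s, (γ' s).base = (γ s).base) ∧ ∀ n s, (γ' s).coord n = u n s := by
  have hbase (s) (n : ℕ+) (h : u n s ≠ 1) : (γ s).base = d n :=
    ESp.base_eq_of_coord_ne_one (mt (huγ n s) h)
  have hend {s : unitInterval} {y : X} (hs : γ s = emb d y) :
      ESp.ofCoord d (γ s).base (fun n => u n s) = emb d y := by
    refine ESp.ext_coord (congrArg ESp.base hs :) fun n => ?_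
    rw [ESp.coord_ofCoord hd (hbase s), ESp.coord_emb, huγ n s (by rw [hs, ESp.coord_emb])]
  exact ⟨{
    toFun := fun s => ESp.ofCoord d (γ s).base fun n => u n s
    continuous_toFun := ESp.continuous_ofCoord hd
      (ESp.lipschitzWith_base.continuous.comp γ.continuous) hu hbase
    source' := hend γ.source
    target' := hend γ.target }, fun s => rfl, fun n s => ESp.coord_ofCoord hd (hbase s) n⟩

theorem exists_homotopic_of_lift (hd : Function.Injective d) (γ : Path (emb d y) (emb d z))
    {l l' : ℕ+ → ℝ → ℝ} (hl : ∀ n, Continuous (l n)) (hl' : ∀ n, Continuous (l' n))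
    (hlγ : ∀ n (s : unitInterval), turn (l n s) = (γ s).coord n)
    (h : ∀ n, ∀ s ∈ Set.Icc (0 : ℝ) 1, ∀ k : ℤ, l n s = k → l' n s = k) :
    ∃ γ' : Path (emb d y) (emb d z), γ.Homotopic γ' ∧
      (∀ s, (γ' s).base = (γ s).base) ∧
      ∀ n (s : unitInterval), (γ' s).coord n = turn (l' n s) := by
  let u (n : ℕ+) (p : unitInterval × unitInterval) : Circle :=
    turn ((1 - p.1) * l n p.2 + p.1 * l' n p.2)
  have hu (n) : Continuous (u n) := by
    have := hl n
    have := hl' n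
    exact continuous_turn.comp (by fun_prop)
  have hu1 (n p) (hp : (γ p.2).coord n = 1) : u n p = 1 := by
    rw [← hlγ, turn_eq_one_iff] at hp
    obtain ⟨k, hk⟩ := hp
    refine turn_eq_one_iff.2 ⟨k, ?_⟩
    rw [h n p.2 p.2.2 k hk, hk]
    ring
  obtain ⟨γ', hbase, hcoord⟩ := exists_path_of_coord hd γ (u := fun n s => u n (1, s))
    (fun n => (hu n).comp (by fun_prop)) fun n s => hu1 n (1, s)
  refine ⟨γ', ?_, hbase, fun n s => (hcoord n s).trans (by simp [u])⟩
  refine homotopic_of_coord hd (F := fun p => (γ p.2).base)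
    ((ESp.lipschitzWith_base.continuous.comp γ.continuous).comp continuous_snd) hu
    (fun n p hp => ESp.base_eq_of_coord_ne_one (mt (hu1 n p) hp))
    (fun s => ⟨rfl, fun n => by simp [u, hlγ]⟩)
    (fun s => ⟨(hbase s).symm, fun n => (hcoord n s).symm⟩)
    (fun t => ⟨congrArg ESp.base γ.source, fun n => hu1 n (t, 0) ?_⟩)
    fun t => ⟨congrArg ESp.base γ.target, fun n => hu1 n (t, 1) ?_⟩
  · rw [γ.source, ESp.coord_emb]
  · rw [γ.target, ESp.coord_emb]

theorem exists_homotopic_staircase (hd : Function.Injective d) (γ : Path (emb d y) (emb d z)) :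
    ∃ (S : StairSystem d fun s => (γ.extend s).base) (γ' : Path (emb d y) (emb d z)),
      γ.Homotopic γ' ∧ (∀ s, (γ' s).base = (γ s).base) ∧
      ∀ n (s : unitInterval), (γ' s).coord n = turn (S.staircase n s) := by
  choose l hl hlγ using fun n =>
    exists_turn_lift ((ESp.lipschitzWith_coord hd n).continuous.comp γ.continuous)
  choose e w hstep hne hint using fun n =>
    exists_stair_approximation (hl n).continuousOn (b := 3) (by norm_num)
  let S : StairSystem d fun s => (γ.extend s).base :=
    { exponent := e
      height := w
      step := hstep
      base := fun n i hi hw s hs => by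
        have hs01 := cell_subset_Icc hi hs
        rw [Path.extend_apply γ hs01]
        refine ESp.base_eq_of_coord_ne_one (n := n) fun h => ?_
        obtain ⟨k, hk⟩ := turn_eq_one_iff.1 ((hlγ n ⟨s, hs01⟩).trans h)
        exact hne n i hi hw s hs k hk }
  exact ⟨S, exists_homotopic_of_lift hd γ hl (fun n => continuous_stair _ _) hlγ hint⟩

end EarringHomotopy

section Collapse

variable [SimplyConnectedSpace X] {d : ℕ+ → X} {x : X} {γ : Path (emb d x) (emb d x)}

theorem homotopic_refl_of_isNoncrossingMatching (hlsc : LocSimplyConnected X)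
    (hd : Function.Injective d) {f : ℝ → X} (hf : Continuous f) {S : StairSystem d f}
    {μ : ℕ+ × ℕ → ℕ+ × ℕ} (hμ : IsNoncrossingMatching S.label S.time S.letters μ)
    (hbase : ∀ s : unitInterval, (γ s).base = f s)
    (hcoord : ∀ n (s : unitInterval), (γ s).coord n = turn (S.staircase n s)) :
    γ.Homotopic (Path.refl (emb d x)) := by
  have hf0 : f 0 = x := (hbase 0).symm.trans (congrArg ESp.base γ.source)
  have hf1 : f 1 = x := (hbase 1).symm.trans (congrArg ESp.base γ.target)
  obtain ⟨F, hF, hdiag, hleft, htop, hFn⟩ :=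
    S.exists_fold_extension hlsc hd hf (hf0.trans hf1.symm) hμ
  have hturn {n : ℕ+} {p : ℝ × ℝ} (hp : S.fold μ n p = 0) : turn (S.fold μ n p) = 1 :=
    turn_eq_one_iff.2 ⟨0, by rw [hp, Int.cast_zero]⟩
  -- The square is mapped onto the triangle, its bottom edge `q.1 = 0` to the hypotenuse.
  let p (q : unitInterval × unitInterval) : ℝ × ℝ := ((1 - q.1) * q.2, (1 - q.1) * q.2 + q.1)
  have hp : Continuous p := by fun_prop
  have hleg₀ (t : unitInterval) : F (0, t) = x ∧ ∀ n, turn (S.fold μ n (0, t)) = 1 :=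
    ⟨(hleft t t.2).trans hf0, fun n => hturn (S.fold_zero_left μ n t)⟩
  have hleg₁ (s : unitInterval) : F (s, 1) = x ∧ ∀ n, turn (S.fold μ n (s, 1)) = 1 :=
    ⟨(htop s s.2).trans hf1, fun n => hturn (S.fold_one_right hμ n s)⟩
  refine homotopic_of_coord hd (hF.comp hp)
    (u := fun n q => turn (S.fold μ n (p q)))
    (fun n => continuous_turn.comp ((S.continuous_fold μ n).comp hp))
    (fun n q hq => hFn n (p q) (le_add_of_nonneg_right q.1.2.1) fun k hk =>
      hq (turn_eq_one_iff.2 ⟨k, hk⟩))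
    (fun s => ?_) (fun s => ?_) (fun t => ?_) fun t => ?_
  · simp [p, hdiag, hbase, hcoord, S.staircase_eq_fold hd hμ, turn_int_add]
  · have hx : (emb d x).base = x := rfl
    simpa [p, hx, ESp.coord_emb] using hleg₁ 0
  · simpa [p] using hleg₀ t
  · simpa [p] using hleg₁ (unitInterval.symm t)

theorem homotopic_refl_of_map_sigmaMap (hlsc : LocSimplyConnected X) (hd : Function.Injective d)
    (hγ : (γ.map (lipschitzWith_sigmaMap hd).continuous).Homotopic (Path.refl _)) :
    γ.Homotopic (Path.refl (emb d x)) := by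
  obtain ⟨S, γ', hγγ', hbase, hcoord⟩ := exists_homotopic_staircase hd γ
  obtain ⟨H⟩ := (hγγ'.map ⟨_, (lipschitzWith_sigmaMap hd).continuous⟩).symm.trans hγ
  have hx : sigmaMap d hd (emb d x) = h0 := sigmaMap_emb hd x
  obtain ⟨μ, hμ⟩ := S.exists_isNoncrossingMatching hd H.continuous
    (fun n s => by
      rw [H.apply_zero, ← hcoord n s]
      exact hawaiianCoord_sigmaMap hd n _)
    (fun s => (H.apply_one s).trans hx) (fun t => (H.source t).trans hx)
    fun t => (H.target t).trans hx
  refine hγγ'.trans (homotopic_refl_of_isNoncrossingMatching hlsc hd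
    (ESp.lipschitzWith_base.continuous.comp γ.continuous_extend) hμ (fun s => ?_) hcoord)
  rw [hbase, Function.comp_apply, Path.extend_apply γ s.2]

end Collapse

theorem sigma_star_injective_general (d : ℕ+ → X) (hd : Function.Injective d)
    [SimplyConnectedSpace X] (hlsc : LocSimplyConnected X) (x : X) :
    ∃ hc : Continuous (sigmaMap d hd),
      (∀ γ : Path (emb d x) (emb d x),
        (γ.map hc).Homotopic (Path.refl (sigmaMap d hd (emb d x))) →
          γ.Homotopic (Path.refl (emb d x))) ∧
      ∃ φ : FundamentalGroup (ESp X d) (emb d x) →* FundamentalGroup HEset h0,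
        Function.Injective φ := by
  have hc : Continuous (sigmaMap d hd) := (lipschitzWith_sigmaMap hd).continuous
  refine ⟨hc, fun γ => homotopic_refl_of_map_sigmaMap hlsc hd, ?_⟩
  rw [← sigmaMap_emb hd x]
  exact ⟨_, fundamentalGroup_map_injective ⟨_, hc⟩ (emb d x) fun γ =>
    homotopic_refl_of_map_sigmaMap hlsc hd⟩

/-- For a simply connected, locally simply connected metric space `X` and a countable
dense subset `D`, the metric quotient map `σ` is continuous and the induced homomorphism
`σ_* : π₁(E(X,D), x) → π₁(H, *)` is injective; consequently `π₁(E(X,D), x)` is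
isomorphic to a subgroup of the Hawaiian earring group. -/
theorem sigma_star_injective (d : ℕ+ → X) (hd : Function.Injective d)
    (hdense : DenseRange d) [SimplyConnectedSpace X] (hlsc : LocSimplyConnected X)
    (x : X) :
    ∃ hc : Continuous (sigmaMap d hd),
      (∀ γ : Path (emb d x) (emb d x),
        (γ.map hc).Homotopic (Path.refl (sigmaMap d hd (emb d x))) →
          γ.Homotopic (Path.refl (emb d x))) ∧
      ∃ φ : FundamentalGroup (ESp X d) (emb d x) →* FundamentalGroup HEset h0,
        Function.Injective φ := by
  exact sigma_star_injective_general d hd hlsc x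

end EarringPaper
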